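/- arXiv:2504.01479 — 8 statements merged into one kernel-verified Lean document; each statement's English description precedes it below -/
import Mathlib

section
/- For every positive integer N and every λ ∈ ℂ, the determinant of the n-order even generalized polarization matrix satisfies det M_{N,c}^{(n)}(λ) = (−1)^{⌊N/2⌋} · Σ_{k=0}^{N} (λ^{N−k} / 2^k) · ( Σ_{1 ≤ i_1 < i_2 < ⋯ < i_k ≤ N} (−1)^{i_1+⋯+i_k} · exp(2 n Σ_{l=1}^{k} (−1)^l ξ_{i_l}) ), where for k = 0 the inner sum is 1 (so the k = 0 term is λ^N). -/
/-!
On the indices `1, …, N` the matrix is `diag (λ_i) + (1/2) (K - a aᵀ)`, where `a_i = e^{-nξ_i}`,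
`x_i = e^{nξ_i}`, and `K` is the antisymmetric matrix with entries `x_i a_j` below the diagonal.
Replace the coefficient `-1` of `a aᵀ` by a variable `s`. Off the diagonal, the last row and the
last column are then multiples of `a`, so eliminating the last index only shifts `s` in the
remaining principal submatrix. By induction, the determinant is a sum over the subsets of
`{1, …, N}`: an index outside the subset contributes `λ_i`, an element of the subset contributes
`x_i ^ 2 / 2` at even and `a_i ^ 2 / 2` at odd position, and a factor `s` appears exactly for the
subsets of odd cardinality.
-/

open Finset

/-- The signed exponential sum
`Σ_{lo ≤ i_1 < ⋯ < i_k ≤ hi} (−1)^{i_1+⋯+i_k} exp(2 n Σ_{l=1}^{k} (−1)^l ξ_{i_l})`,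
where the `l`-th smallest element of a subset `s` carries the sign `(−1)^l`
(the position of `i ∈ s` is `(s.filter (· ≤ i)).card`). For `k = 0` the sum is `1`. -/
noncomputable def sgnExpSum (n : ℕ) (ξ : ℕ → ℝ) (lo hi k : ℕ) : ℝ :=
  ∑ s ∈ (Finset.Icc lo hi).powersetCard k,
    (-1 : ℝ) ^ (∑ i ∈ s, i) *
      Real.exp (2 * n * ∑ i ∈ s, (-1 : ℝ) ^ ((s.filter (· ≤ i)).card) * ξ i)

/-- The `n`-order even generalized polarization matrix `M_{N,c}^{(n)}(λ)`:
with 1-based indices `p = i+1`, `q = j+1`, the `(p,p)` entry is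
`(−1)^{p−1} λ − (1/2) e^{−2nξ_p}`, the `(p,q)` entry for `p < q` is
`−cosh(nξ_q) e^{−nξ_p}`, and for `p > q` it is `sinh(nξ_p) e^{−nξ_q}`. -/
noncomputable def Mc (n N : ℕ) (ξ : ℕ → ℝ) (l : ℂ) : Matrix (Fin N) (Fin N) ℂ :=
  fun i j =>
    if i = j then
      (-1 : ℂ) ^ (i : ℕ) * l - ((Real.exp (-(2 * n * ξ ((i : ℕ) + 1))) / 2 : ℝ) : ℂ)
    else if i < j then
      -(((Real.cosh (n * ξ ((j : ℕ) + 1)) * Real.exp (-(n * ξ ((i : ℕ) + 1)))) : ℝ) : ℂ)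
    else
      (((Real.sinh (n * ξ ((i : ℕ) + 1)) * Real.exp (-(n * ξ ((j : ℕ) + 1)))) : ℝ) : ℂ)

section ShiftedSkewMatrix

variable {ι R : Type*} [CommRing R]

/-- The last row `(v, d)` is the difference of `(0, d + 1)` and `(-v, 1)`, which makes the Schur
complement available without inverting anything. -/
lemma det_fromBlocks_replicateCol_replicateRow {m : Type*} [Fintype m] [DecidableEq m]
    (A : Matrix m m R) (u v : m → R) (d : R) :
    (Matrix.fromBlocks A (Matrix.replicateCol Unit u) (Matrix.replicateRow Unit v)
      (Matrix.of fun _ _ => d)).det = (d + 1) * A.det - (A + Matrix.vecMulVec u v).det := by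
  let bordered (w : m → R) (e : R) : Matrix (m ⊕ Unit) (m ⊕ Unit) R :=
    Matrix.fromBlocks A (Matrix.replicateCol Unit u) (Matrix.replicateRow Unit w)
      (Matrix.of fun _ _ => e)
  have bordered_eq (w : m → R) (e : R) :
      bordered w e = (bordered v d).updateRow (Sum.inr ()) (Sum.elim w fun _ => e) := by
    ext (i | i) (j | j) <;> simp [bordered, Matrix.updateRow_apply]
  have last_row : Sum.elim v (fun _ : Unit => d) =
      Sum.elim (0 : m → R) (fun _ => d + 1) + (-1 : R) • Sum.elim (-v) (fun _ => 1) := by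
    ext (j | j) <;> simp
  have det_zero : (bordered 0 (d + 1)).det = (d + 1) * A.det := by
    have row_zero : Matrix.replicateRow Unit (0 : m → R) = 0 := rfl
    simp [bordered, row_zero, Matrix.det_fromBlocks_zero₂₁, mul_comm]
  have det_neg : (bordered (-v) 1).det = (A + Matrix.vecMulVec u v).det := by
    have corner_one : (Matrix.of fun _ _ : Unit => (1 : R)) = 1 := by ext; simp
    simp only [bordered, corner_one, Matrix.det_fromBlocks_one₂₂]
    congr 1
    ext i j
    simp [Matrix.mul_apply, Matrix.vecMulVec_apply]
  change (bordered v d).det = _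
  rw [bordered_eq v d, last_row, Matrix.det_updateRow_add, Matrix.det_updateRow_smul,
    ← bordered_eq, ← bordered_eq, det_zero, det_neg]
  ring

/-- The minor of `M` whose rows and columns are both selected by `S`. -/
def principalMinor [DecidableEq ι] (M : Matrix ι ι R) (S : Finset ι) : R :=
  (M.submatrix (Subtype.val : S → ι) Subtype.val).det

variable [LinearOrder ι]

/-- The matrix `diag L + c (K + s a aᵀ)`, where `K` is the antisymmetric matrix with entries
`x i * a j` below the diagonal. The index type may be infinite; determinants are taken of
principal submatrices on finite sets. -/
def shiftedSkewMatrix (L a x : ι → R) (c s : R) : Matrix ι ι R :=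
  Matrix.of fun i j =>
    if i = j then L i + c * s * a i ^ 2
    else if i < j then c * (s * a j - x j) * a i
    else c * (s * a i + x i) * a j

/-- The product over `t` which takes the factor `f i` at odd and `g i` at even positions, where the
least element of `t` has position `1`. -/
def alternatingProd {M : Type*} [CommMonoid M] (f g : ι → M) (t : Finset ι) : M :=
  ∏ i ∈ t, if Even #{j ∈ t | j ≤ i} then g i else f i

lemma alternatingProd_insert_of_forall_lt {M : Type*} [CommMonoid M] (f g : ι → M)
    {b : ι} {t : Finset ι} (hb : ∀ i ∈ t, i < b) :
    alternatingProd f g (insert b t) =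
      (if Even #t then f b else g b) * alternatingProd f g t := by
  have hbt : b ∉ t := fun h => (hb b h).false
  have card_top : #{j ∈ insert b t | j ≤ b} = #t + 1 := by
    rw [filter_true_of_mem (by simpa using fun i hi => (hb i hi).le), card_insert_of_notMem hbt]
  have card_below : ∀ i ∈ t, #{j ∈ insert b t | j ≤ i} = #{j ∈ t | j ≤ i} := fun i hi => by
    rw [filter_insert, if_neg (hb i hi).not_ge]
  rw [alternatingProd, prod_insert hbt, card_top]
  congr 1
  · simp only [Nat.even_add_one, ite_not]
  · exact prod_congr rfl fun i hi => by rw [card_below i hi]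

variable (L a x : ι → R) (c s : R)

lemma shiftedSkewMatrix_apply_self (i : ι) :
    shiftedSkewMatrix L a x c s i i = L i + c * s * a i ^ 2 := if_pos rfl

lemma shiftedSkewMatrix_apply_of_lt {i j : ι} (h : i < j) :
    shiftedSkewMatrix L a x c s i j = c * (s * a j - x j) * a i :=
  (if_neg h.ne).trans (if_pos h)

lemma shiftedSkewMatrix_apply_of_gt {i j : ι} (h : j < i) :
    shiftedSkewMatrix L a x c s i j = c * (s * a i + x i) * a j :=
  (if_neg h.ne').trans (if_neg h.not_gt)

lemma shiftedSkewMatrix_add_apply (r : R) (i j : ι) :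
    shiftedSkewMatrix L a x c s i j + c * r * (a i * a j) =
      shiftedSkewMatrix L a x c (s + r) i j := by
  rcases lt_trichotomy i j with h | rfl | h
  · simp only [shiftedSkewMatrix_apply_of_lt _ _ _ _ _ h]
    ring
  · simp only [shiftedSkewMatrix_apply_self]
    ring
  · simp only [shiftedSkewMatrix_apply_of_gt _ _ _ _ _ h]
    ring

lemma principalMinor_shiftedSkewMatrix_insert {S : Finset ι} {b : ι} (hb : ∀ i ∈ S, i < b) :
    principalMinor (shiftedSkewMatrix L a x c s) (insert b S) =
      (L b + c * s * a b ^ 2 + 1) * principalMinor (shiftedSkewMatrix L a x c s) S -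
        principalMinor (shiftedSkewMatrix L a x c (s + c * (s ^ 2 * a b ^ 2 - x b ^ 2))) S := by
  have hbS : b ∉ S := fun h => (hb b h).false
  let e : S ⊕ Unit ≃ ↥(insert b S) :=
    ((subtypeInsertEquivOption hbS).trans (Equiv.optionEquivSumPUnit _)).symm
  let block (r : R) : Matrix S S R :=
    (shiftedSkewMatrix L a x c r).submatrix Subtype.val Subtype.val
  let col (i : S) : R := c * (s * a b - x b) * a i
  let row (j : S) : R := c * (s * a b + x b) * a j
  have bordered :
      ((shiftedSkewMatrix L a x c s).submatrix Subtype.val Subtype.val).submatrix e e =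
        Matrix.fromBlocks (block s) (Matrix.replicateCol Unit col) (Matrix.replicateRow Unit row)
          (Matrix.of fun _ _ => L b + c * s * a b ^ 2) := by
    ext (i | i) (j | j)
    · rfl
    · exact shiftedSkewMatrix_apply_of_lt L a x c s (hb i i.2)
    · exact shiftedSkewMatrix_apply_of_gt L a x c s (hb j j.2)
    · exact shiftedSkewMatrix_apply_self L a x c s b
  have shifted : block s + Matrix.vecMulVec col row =
      block (s + c * (s ^ 2 * a b ^ 2 - x b ^ 2)) := by
    ext i j
    have outer : col i * row j = c * (c * (s ^ 2 * a b ^ 2 - x b ^ 2)) * (a i * a j) := by ring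
    rw [Matrix.add_apply, Matrix.vecMulVec_apply, outer]
    exact shiftedSkewMatrix_add_apply L a x c s _ i j
  rw [principalMinor, ← Matrix.det_submatrix_equiv_self e, bordered,
    det_fromBlocks_replicateCol_replicateRow, shifted]
  rfl

theorem principalMinor_shiftedSkewMatrix (S : Finset ι) :
    principalMinor (shiftedSkewMatrix L a x c s) S =
      ∑ t ∈ S.powerset, s ^ (#t % 2) * c ^ #t * (∏ i ∈ S \ t, L i) *
        alternatingProd (fun i => a i ^ 2) (fun i => x i ^ 2) t := by
  induction S using Finset.induction_on_max generalizing s with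
  | empty => simp [principalMinor, alternatingProd]
  | insert b S hb ih =>
    have hbS : b ∉ S := fun h => (hb b h).false
    rw [principalMinor_shiftedSkewMatrix_insert L a x c s hb, ih, ih, sum_powerset_insert hbS,
      mul_sum, ← sum_sub_distrib, ← sum_add_distrib]
    refine sum_congr rfl fun t ht => ?_
    have htS : t ⊆ S := mem_powerset.mp ht
    have hbt : b ∉ t := fun h => hbS (htS h)
    have sdiff_old : insert b S \ t = insert b (S \ t) := insert_sdiff_of_notMem _ hbt
    have sdiff_new : insert b S \ insert b t = S \ t := by
      rw [insert_sdiff_insert, sdiff_insert_of_notMem hbS]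
    rw [sdiff_old, sdiff_new, prod_insert (by simp [hbS]), card_insert_of_notMem hbt,
      alternatingProd_insert_of_forall_lt _ _ fun i hi => hb i (htS hi)]
    rcases Nat.even_or_odd #t with ht | ht
    · rw [if_pos ht, Nat.even_iff.mp ht, Nat.odd_iff.mp ht.add_one]
      ring
    · rw [if_neg (Nat.not_even_iff_odd.mpr ht), Nat.odd_iff.mp ht, Nat.even_iff.mp ht.add_one]
      ring

end ShiftedSkewMatrix

lemma prod_Icc_neg_one_pow_succ {R : Type*} [CommRing R] (N : ℕ) :
    ∏ i ∈ Icc 1 N, (-1 : R) ^ (i + 1) = (-1) ^ (N / 2) := by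
  induction N with
  | zero => simp
  | succ N ih =>
    rw [prod_Icc_succ_top (by omega), ih]
    rcases Nat.even_or_odd' N with ⟨k, rfl | rfl⟩
    · rw [show (2 * k + 1) / 2 = k by omega, show 2 * k / 2 = k by omega]
      simp [pow_add, pow_mul]
    · rw [show (2 * k + 1 + 1) / 2 = k + 1 by omega, show (2 * k + 1) / 2 = k by omega]
      simp [pow_add, pow_mul]

lemma prod_Icc_sdiff_neg_one_pow_mul {R : Type*} [CommRing R] (l : R) {N : ℕ} {t : Finset ℕ}
    (ht : t ⊆ Icc 1 N) :
    ∏ i ∈ Icc 1 N \ t, (-1) ^ (i + 1) * l =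
      (-1) ^ (N / 2) * (-1) ^ (∑ i ∈ t, i) * (-1) ^ #t * l ^ (N - #t) := by
  have prod_t : ∏ i ∈ t, (-1 : R) ^ (i + 1) = (-1) ^ (∑ i ∈ t, i) * (-1) ^ #t := by
    rw [prod_pow_eq_pow_sum, sum_add_distrib, pow_add, sum_const, smul_eq_mul, mul_one]
  have sq_prod_t : (∏ i ∈ t, (-1 : R) ^ (i + 1)) * ∏ i ∈ t, (-1 : R) ^ (i + 1) = 1 := by
    rw [prod_pow_eq_pow_sum, ← mul_pow, neg_one_mul, neg_neg, one_pow]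
  have sign : ∏ i ∈ Icc 1 N \ t, (-1 : R) ^ (i + 1) =
      (-1) ^ (N / 2) * ∏ i ∈ t, (-1 : R) ^ (i + 1) := by
    rw [← prod_Icc_neg_one_pow_succ, ← prod_sdiff ht, mul_assoc, sq_prod_t, mul_one]
  rw [prod_mul_distrib, prod_const, card_sdiff_of_subset ht, Nat.card_Icc, Nat.add_sub_cancel, sign,
    prod_t]
  ring

lemma alternatingProd_exp_sq {ι : Type*} [LinearOrder ι] (y : ι → ℝ) (t : Finset ι) :
    alternatingProd (fun i => (Real.exp (-y i) : ℂ) ^ 2) (fun i => (Real.exp (y i) : ℂ) ^ 2) t =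
      (Real.exp (2 * ∑ i ∈ t, (-1) ^ #{j ∈ t | j ≤ i} * y i) : ℂ) := by
  rw [alternatingProd, mul_sum, Real.exp_sum, Complex.ofReal_prod]
  refine prod_congr rfl fun i _ => ?_
  split_ifs with h
  · rw [h.neg_one_pow, one_mul, ← Complex.ofReal_pow, ← Real.exp_nat_mul, Nat.cast_two]
  · rw [(Nat.not_even_iff_odd.mp h).neg_one_pow, neg_one_mul, ← Complex.ofReal_pow,
      ← Real.exp_nat_mul, Nat.cast_two]

lemma sum_range_mul_sgnExpSum (n N : ℕ) (ξ : ℕ → ℝ) (f : ℕ → ℂ) :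
    ∑ k ∈ range (N + 1), f k * (sgnExpSum n ξ 1 N k : ℂ) =
      ∑ t ∈ (Icc 1 N).powerset, f #t * ((-1) ^ (∑ i ∈ t, i) *
        (Real.exp (2 * n * ∑ i ∈ t, (-1) ^ #{j ∈ t | j ≤ i} * ξ i) : ℂ)) := by
  rw [sum_powerset, Nat.card_Icc, Nat.add_sub_cancel]
  refine sum_congr rfl fun k _ => ?_
  rw [sgnExpSum, Complex.ofReal_sum, mul_sum]
  refine sum_congr rfl fun t ht => ?_
  rw [(mem_powersetCard.mp ht).2]
  push_cast
  rfl

/-- The common extension of the matrices `Mc n N ξ l` to all 1-based indices: `Mc n N ξ l` is its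
principal submatrix on `{1, …, N}`. The sign `(-1)^(p+1)` stands for `(-1)^(p-1)`, to avoid
truncated subtraction. -/
noncomputable def polarizationMatrix (n : ℕ) (ξ : ℕ → ℝ) (l : ℂ) : Matrix ℕ ℕ ℂ :=
  shiftedSkewMatrix (fun p => (-1) ^ (p + 1) * l) (fun p => (Real.exp (-(n * ξ p)) : ℂ))
    (fun p => (Real.exp (n * ξ p) : ℂ)) (1 / 2) (-1)

lemma Mc_apply_eq_polarizationMatrix (n N : ℕ) (ξ : ℕ → ℝ) (l : ℂ) (i j : Fin N) :
    Mc n N ξ l i j = polarizationMatrix n ξ l (i + 1) (j + 1) := by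
  rw [polarizationMatrix]
  rcases lt_trichotomy i j with h | rfl | h
  · have hij : (i : ℕ) + 1 < j + 1 := Nat.add_lt_add_right h 1
    rw [shiftedSkewMatrix_apply_of_lt _ _ _ _ _ hij, Mc, if_neg h.ne, if_pos h, Real.cosh_eq]
    push_cast
    ring
  · have exp_sq : Real.exp (-(2 * n * ξ (i + 1))) = Real.exp (-(n * ξ (i + 1))) ^ 2 := by
      rw [← Real.exp_nat_mul, Nat.cast_two, mul_neg, mul_assoc]
    rw [shiftedSkewMatrix_apply_self, Mc, if_pos rfl, exp_sq]
    push_cast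
    ring
  · have hji : (j : ℕ) + 1 < i + 1 := Nat.add_lt_add_right h 1
    rw [shiftedSkewMatrix_apply_of_gt _ _ _ _ _ hji, Mc, if_neg h.ne', if_neg h.not_gt,
      Real.sinh_eq]
    push_cast
    ring

lemma det_Mc_eq_principalMinor (n N : ℕ) (ξ : ℕ → ℝ) (l : ℂ) :
    (Mc n N ξ l).det = principalMinor (polarizationMatrix n ξ l) (Icc 1 N) := by
  let e : Fin N ≃ Icc 1 N :=
    { toFun i := ⟨i + 1, by simp⟩
      invFun p := ⟨p - 1, by have := mem_Icc.mp p.2; omega⟩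
      left_inv i := by simp
      right_inv p := Subtype.ext (Nat.sub_add_cancel (mem_Icc.mp p.2).1) }
  refine Eq.trans ?_ (Matrix.det_submatrix_equiv_self e _)
  congr 1
  ext i j
  exact Mc_apply_eq_polarizationMatrix n N ξ l i j

theorem det_Mc_eq_general (N n : ℕ) (ξ : ℕ → ℝ) (l : ℂ) :
    (Mc n N ξ l).det =
      (-1) ^ (N / 2) * ∑ k ∈ range (N + 1), l ^ (N - k) / 2 ^ k * (sgnExpSum n ξ 1 N k : ℂ) := by
  rw [det_Mc_eq_principalMinor, polarizationMatrix, principalMinor_shiftedSkewMatrix,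
    sum_range_mul_sgnExpSum, mul_sum]
  refine sum_congr rfl fun t ht => ?_
  have weight : (-1 : ℂ) ^ (#t % 2) * (1 / 2) ^ #t * (-1) ^ #t = 1 / 2 ^ #t := by
    rw [← neg_one_pow_eq_pow_mod_two, mul_right_comm, ← mul_pow, neg_one_mul, neg_neg, one_pow,
      one_mul, one_div_pow]
  have exponent : 2 * n * ∑ i ∈ t, (-1) ^ #{j ∈ t | j ≤ i} * ξ i =
      2 * ∑ i ∈ t, (-1) ^ #{j ∈ t | j ≤ i} * (n * ξ i) := by
    simp only [mul_assoc, mul_sum, mul_left_comm]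
  rw [prod_Icc_sdiff_neg_one_pow_mul l (mem_powerset.mp ht), alternatingProd_exp_sq, exponent]
  linear_combination ((-1) ^ (N / 2) * (-1) ^ (∑ i ∈ t, i) * l ^ (N - #t) *
    (Real.exp (2 * ∑ i ∈ t, (-1) ^ #{j ∈ t | j ≤ i} * (n * ξ i)) : ℂ)) * weight

/-- Explicit formula for the determinant of the `n`-order even GPM. -/
theorem det_Mc_eq (N n : ℕ) (hN : 0 < N) (hn : 0 < n) (ξ : ℕ → ℝ)
    (hξ : ∀ i j, 1 ≤ i → i < j → j ≤ N → ξ j < ξ i) (hpos : 0 < ξ N) (l : ℂ) :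
    (Mc n N ξ l).det =
      (-1 : ℂ) ^ (N / 2) *
        ∑ k ∈ Finset.range (N + 1),
          l ^ (N - k) / 2 ^ k * ((sgnExpSum n ξ 1 N k : ℝ) : ℂ) := by
  exact det_Mc_eq_general N n ξ l
end

section
/- For every positive integer N and every λ ∈ ℂ, the determinant of the n-order odd generalized polarization matrix satisfies det M_{N,s}^{(n)}(λ) = (−1)^{⌊N/2⌋} · Σ_{k=0}^{N} (λ^{N−k} / (−2)^k) · ( Σ_{1 ≤ i_1 < i_2 < ⋯ < i_k ≤ N} (−1)^{i_1+⋯+i_k} · exp(2 n Σ_{l=1}^{k} (−1)^l ξ_{i_l}) ), where for k = 0 the inner sum is 1 (so the k = 0 term is λ^N). -/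
open Finset

/-- The `n`-order odd generalized polarization matrix `M_{N,s}^{(n)}(λ)`:
with 1-based indices `p = i+1`, `q = j+1`, the `(p,p)` entry is
`(−1)^{p−1} λ + (1/2) e^{−2nξ_p}`, the `(p,q)` entry for `p < q` is
`−sinh(nξ_q) e^{−nξ_p}`, and for `p > q` it is `cosh(nξ_p) e^{−nξ_q}`. -/
noncomputable def Ms (n N : ℕ) (ξ : ℕ → ℝ) (l : ℂ) : Matrix (Fin N) (Fin N) ℂ :=
  fun i j =>
    if i = j then
      (-1 : ℂ) ^ (i : ℕ) * l + ((Real.exp (-(2 * n * ξ ((i : ℕ) + 1))) / 2 : ℝ) : ℂ)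
    else if i < j then
      -(((Real.sinh (n * ξ ((j : ℕ) + 1)) * Real.exp (-(n * ξ ((i : ℕ) + 1)))) : ℝ) : ℂ)
    else
      (((Real.cosh (n * ξ ((i : ℕ) + 1)) * Real.exp (-(n * ξ ((j : ℕ) + 1)))) : ℝ) : ℂ)

/-!
Apart from a factor `1/2`, the matrix is `D + K + x xᵀ` with `D` diagonal, `K` skew-symmetric and
`x i = exp (-n ξ i)`. The determinant of `D + K + u x xᵀ` is affine in `u`, say `F + u E`. Since the
row and column bordering it at the next index are multiples of `x`, the Schur complement only shifts
`u`, and one finds `F ↦ d F + z² E`, `E ↦ d E + x² F`. The sums over the subsets of even and of odd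
cardinality obey the same recursion: the new maximal index occupies an odd position, and
contributes `x²`, exactly when it is adjoined to a subset of even cardinality.
-/

section InterleavedProd

variable {α M : Type*} [LinearOrder α] [CommMonoid M]

/-- The interleaved product `a i₁ * b i₂ * a i₃ * b i₄ * ⋯` over the elements `i₁ < i₂ < i₃ < ⋯`
of `s`; the position of `i` in `s` is encoded as the cardinality of `{j ∈ s | j ≤ i}`. -/
def interleavedProd (a b : α → M) (s : Finset α) : M :=
  ∏ i ∈ s, if Odd #{j ∈ s | j ≤ i} then a i else b i

lemma interleavedProd_insert_of_forall_lt (a b : α → M) {s : Finset α} {m : α}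
    (hm : ∀ i ∈ s, i < m) :
    interleavedProd a b (insert m s) =
      (if Even #s then a m else b m) * interleavedProd a b s := by
  have hms : m ∉ s := fun h => (hm m h).false
  have position_max : #{j ∈ insert m s | j ≤ m} = #s + 1 := by
    rw [filter_true_of_mem (by simpa using fun i hi => (hm i hi).le), card_insert_of_notMem hms]
  have filter_le_insert : ∀ i ∈ s, {j ∈ insert m s | j ≤ i} = {j ∈ s | j ≤ i} := fun i hi => by
    rw [filter_insert, if_neg (hm i hi).not_ge]
  rw [interleavedProd, prod_insert hms, position_max]
  simp only [Nat.odd_add_one, Nat.not_odd_iff_even]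
  exact congrArg _ (prod_congr rfl fun i hi => by rw [filter_le_insert i hi])

lemma interleavedProd_exp (f : α → ℂ) (s : Finset α) :
    interleavedProd (fun i => Complex.exp (-f i)) (fun i => Complex.exp (f i)) s =
      Complex.exp (∑ i ∈ s, (-1) ^ #{j ∈ s | j ≤ i} * f i) := by
  rw [Complex.exp_sum]
  refine prod_congr rfl fun i _ => ?_
  split_ifs with h
  · rw [h.neg_one_pow, neg_one_mul]
  · rw [(Nat.not_odd_iff_even.1 h).neg_one_pow, one_mul]

end InterleavedProd

section SubsetExpansion

variable {α R : Type*} [LinearOrder α] [CommRing R] (d a b : α → R)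

/-- The term indexed by `s ⊆ t` in the expansion of a determinant: a diagonal factor `d i` for each
`i ∈ t \ s`, and the interleaved product of `a` and `b` over `s`. -/
def expansionTerm (t s : Finset α) : R :=
  (∏ i ∈ t \ s, d i) * interleavedProd a b s

/-- The part of the subset expansion over `t` coming from the subsets of even cardinality. -/
def evenExpansion (t : Finset α) : R :=
  ∑ s ∈ t.powerset with Even #s, expansionTerm d a b t s

/-- The part of the subset expansion over `t` coming from the subsets of odd cardinality. -/
def oddExpansion (t : Finset α) : R :=
  ∑ s ∈ t.powerset with Odd #s, expansionTerm d a b t s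

lemma evenExpansion_add_oddExpansion (t : Finset α) :
    evenExpansion d a b t + oddExpansion d a b t = ∑ s ∈ t.powerset, expansionTerm d a b t s := by
  simp only [evenExpansion, oddExpansion, ← Nat.not_even_iff_odd, sum_filter_add_sum_filter_not]

variable {m : α} {s t : Finset α}

lemma expansionTerm_insert_left (hmt : m ∉ t) (hst : s ⊆ t) :
    expansionTerm d a b (insert m t) s = d m * expansionTerm d a b t s := by
  rw [expansionTerm, insert_sdiff_of_notMem t (fun h => hmt (hst h)),
    prod_insert (fun h => hmt (mem_sdiff.1 h).1), mul_assoc, expansionTerm]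

lemma expansionTerm_insert_insert (hm : ∀ i ∈ t, i < m) (hst : s ⊆ t) :
    expansionTerm d a b (insert m t) (insert m s) =
      (if Even #s then a m else b m) * expansionTerm d a b t s := by
  have hmt : m ∉ t := fun h => (hm m h).false
  rw [expansionTerm, insert_sdiff_insert, sdiff_insert_of_notMem hmt,
    interleavedProd_insert_of_forall_lt a b fun i hi => hm i (hst hi), expansionTerm]
  exact mul_left_comm _ _ _

lemma sum_expansionTerm_insert (P : ℕ → Prop) [DecidablePred P] (hm : ∀ i ∈ t, i < m) :
    ∑ s ∈ (insert m t).powerset with P #s, expansionTerm d a b (insert m t) s =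
      d m * ∑ s ∈ t.powerset with P #s, expansionTerm d a b t s +
        ∑ s ∈ t.powerset with P (#s + 1),
          (if Even #s then a m else b m) * expansionTerm d a b t s := by
  have hmt : m ∉ t := fun h => (hm m h).false
  simp only [sum_filter]
  rw [sum_powerset_insert hmt, mul_sum]
  congr 1 <;> refine sum_congr rfl fun s hs => ?_
  · rw [expansionTerm_insert_left d a b hmt (mem_powerset.1 hs), mul_ite, mul_zero]
  · rw [expansionTerm_insert_insert d a b hm (mem_powerset.1 hs),
      card_insert_of_notMem fun h => hmt (mem_powerset.1 hs h)]

lemma evenExpansion_insert (hm : ∀ i ∈ t, i < m) :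
    evenExpansion d a b (insert m t) =
      d m * evenExpansion d a b t + b m * oddExpansion d a b t := by
  unfold evenExpansion oddExpansion
  rw [sum_expansionTerm_insert d a b _ hm, mul_sum _ _ (b m)]
  simp only [Nat.even_add_one, Nat.not_even_iff_odd]
  congr 1
  refine sum_congr rfl fun s hs => ?_
  rw [if_neg (Nat.not_even_iff_odd.2 (mem_filter.1 hs).2)]

lemma oddExpansion_insert (hm : ∀ i ∈ t, i < m) :
    oddExpansion d a b (insert m t) =
      d m * oddExpansion d a b t + a m * evenExpansion d a b t := by
  unfold evenExpansion oddExpansion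
  rw [sum_expansionTerm_insert d a b _ hm, mul_sum _ _ (a m)]
  simp only [Nat.odd_add_one, Nat.not_odd_iff_even]
  congr 1
  refine sum_congr rfl fun s hs => ?_
  rw [if_pos (mem_filter.1 hs).2]

end SubsetExpansion

section SkewRankOne

variable {R : Type*} [CommRing R]

-- Both sides are affine in the entry of `D` with slope `A.det`, and for `D = 1` this is the Schur
-- complement formula.
lemma det_fromBlocks_of_unique {m n : Type*} [Fintype m] [DecidableEq m] [Fintype n]
    [DecidableEq n] [Unique n] (A : Matrix m m R) (B : Matrix m n R) (C : Matrix n m R)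
    (D : Matrix n n R) :
    (Matrix.fromBlocks A B C D).det = (D default default - 1) * A.det + (A - B * C).det := by
  have updateRow_inr (C' : Matrix n m R) (D' : Matrix n n R) :
      (Matrix.fromBlocks A B C D).updateRow (Sum.inr default)
        (Sum.elim (C' default) (D' default)) = Matrix.fromBlocks A B C' D' := by
    ext (i | i) (j | j) <;> simp [Matrix.updateRow_apply, Unique.eq_default]
  have last_row : Sum.elim (C default) (D default) =
      (D default default - 1) • Sum.elim ((0 : Matrix n m R) default) ((1 : Matrix n n R) default) +
        Sum.elim (C default) ((1 : Matrix n n R) default) := by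
    ext (j | j) <;> simp [Unique.eq_default]
  rw [← updateRow_inr C D, last_row, Matrix.det_updateRow_add, Matrix.det_updateRow_smul,
    updateRow_inr, updateRow_inr, Matrix.det_fromBlocks_zero₂₁, Matrix.det_one, mul_one,
    Matrix.det_fromBlocks_one₂₂]

/-- The matrix `D + K + u x xᵀ`, with `D` the diagonal matrix of the `d i` and `K` the
skew-symmetric matrix with `(i, j)` entry `-x i * z j` for `i < j`. The sequences are indexed
from `1`. -/
def skewRankOneMatrix (d x z : ℕ → R) (u : R) (N : ℕ) : Matrix (Fin N) (Fin N) R :=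
  Matrix.of fun i j =>
    if i = j then d (i + 1) + u * x (i + 1) ^ 2
    else if i < j then x (i + 1) * (u * x (j + 1) - z (j + 1))
    else (u * x (i + 1) + z (i + 1)) * x (j + 1)

variable (d x z : ℕ → R)

lemma skewRankOneMatrix_succ (u : R) (N : ℕ) :
    (skewRankOneMatrix d x z u (N + 1)).submatrix finSumFinEquiv finSumFinEquiv =
      Matrix.fromBlocks (skewRankOneMatrix d x z u N)
        (Matrix.of fun i (_ : Fin 1) => x (i + 1) * (u * x (N + 1) - z (N + 1)))
        (Matrix.of fun (_ : Fin 1) j => (u * x (N + 1) + z (N + 1)) * x (j + 1))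
        (Matrix.of fun _ _ => d (N + 1) + u * x (N + 1) ^ 2) := by
  ext (i | i) (j | j)
  · simp [skewRankOneMatrix, Fin.ext_iff, Fin.lt_def, -Fin.val_fin_lt]
  · simp [skewRankOneMatrix, Fin.ext_iff, Fin.lt_def, -Fin.val_fin_lt, i.2, i.2.ne]
  · simp [skewRankOneMatrix, Fin.ext_iff, Fin.lt_def, -Fin.val_fin_lt, j.2.ne', j.2.not_gt]
  · simp [skewRankOneMatrix, Fin.ext_iff]

lemma skewRankOneMatrix_sub_mul (u v w : R) (N : ℕ) :
    skewRankOneMatrix d x z u N -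
        (Matrix.of fun (i : Fin N) (_ : Fin 1) => x (i + 1) * v) *
          (Matrix.of fun (_ : Fin 1) (j : Fin N) => w * x (j + 1)) =
      skewRankOneMatrix d x z (u - v * w) N := by
  ext i j
  simp only [Matrix.sub_apply, Matrix.mul_apply, Matrix.of_apply, skewRankOneMatrix, univ_unique,
    sum_singleton]
  split_ifs with h
  · rw [h]; ring
  · ring
  · ring

lemma det_skewRankOneMatrix (u : R) (N : ℕ) :
    (skewRankOneMatrix d x z u N).det =
      evenExpansion d (x ^ 2) (z ^ 2) (Icc 1 N) +
        u * oddExpansion d (x ^ 2) (z ^ 2) (Icc 1 N) := by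
  induction N generalizing u with
  | zero => simp [evenExpansion, oddExpansion, expansionTerm, interleavedProd, sum_filter]
  | succ N ih =>
    have lt_succ : ∀ i ∈ Icc 1 N, i < N + 1 := fun i hi => Nat.lt_succ_of_le (mem_Icc.1 hi).2
    rw [← Matrix.det_submatrix_equiv_self finSumFinEquiv, skewRankOneMatrix_succ,
      det_fromBlocks_of_unique, skewRankOneMatrix_sub_mul, ih, ih,
      ← insert_Icc_right_eq_Icc_add_one (Nat.le_add_left 1 N),
      evenExpansion_insert _ _ _ lt_succ, oddExpansion_insert _ _ _ lt_succ]
    simp only [Matrix.of_apply, Pi.pow_apply]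
    ring

end SkewRankOne

section Polarization

lemma neg_one_pow_add_sum_Icc {R : Type*} [Monoid R] [HasDistribNeg R] (N : ℕ) :
    (-1 : R) ^ (N + ∑ i ∈ Icc 1 N, i) = (-1) ^ (N / 2) := by
  have mod_two : (N + ∑ i ∈ Icc 1 N, i) % 2 = N / 2 % 2 := by
    induction N with
    | zero => simp
    | succ N ih => rw [sum_Icc_succ_top (Nat.le_add_left 1 N)]; grind
  exact neg_one_pow_congr (by rw [Nat.even_iff, Nat.even_iff, mod_two])

-- The diagonal sequence `(-1) ^ i * (-2 * l)` is `2 λ_i`, free of the truncated exponent `i - 1`.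
lemma Ms_eq_smul_skewRankOneMatrix (n N : ℕ) (ξ : ℕ → ℝ) (l : ℂ) :
    Ms n N ξ l = (1 / 2 : ℂ) • skewRankOneMatrix (fun i => (-1) ^ i * (-2 * l))
      (fun i => Complex.exp (-(n * ξ i))) (fun i => Complex.exp (n * ξ i)) 1 N := by
  ext i j
  simp only [Ms, skewRankOneMatrix, Matrix.smul_apply, Matrix.of_apply, smul_eq_mul]
  split_ifs
  · push_cast
    rw [← Complex.exp_nat_mul, pow_succ]
    push_cast
    ring_nf
  · push_cast [Complex.sinh]
    ring
  · push_cast [Complex.cosh]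
    ring

lemma interleavedProd_sq_exp (n : ℕ) (ξ : ℕ → ℝ) (s : Finset ℕ) :
    interleavedProd ((fun i => Complex.exp (-(n * ξ i))) ^ 2)
        ((fun i => Complex.exp (n * ξ i)) ^ 2) s =
      (Real.exp (2 * n * ∑ i ∈ s, (-1 : ℝ) ^ #{j ∈ s | j ≤ i} * ξ i) : ℂ) := by
  have exp_sq (f : ℕ → ℂ) :
      (fun i => Complex.exp (f i)) ^ 2 = fun i => Complex.exp (2 * f i) :=
    funext fun i => (Complex.exp_nat_mul (f i) 2).symm
  simp only [exp_sq, mul_neg]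
  rw [interleavedProd_exp]
  push_cast
  rw [mul_sum]
  exact congrArg _ (sum_congr rfl fun i _ => by ring)

lemma prod_sdiff_neg_one_pow_mul {R : Type*} [CommRing R] (l : R) {s t : Finset ℕ} (hst : s ⊆ t) :
    ∏ i ∈ t \ s, (-1) ^ i * l =
      (-1) ^ (∑ i ∈ t, i) * (-1) ^ (∑ i ∈ s, i) * l ^ (#t - #s) := by
  rw [prod_mul_distrib, prod_pow_eq_pow_sum, prod_const, card_sdiff_of_subset hst,
    ← sum_sdiff hst, pow_add, mul_assoc ((-1) ^ _), ← mul_pow, neg_mul_neg, one_mul, one_pow,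
    mul_one]

lemma half_pow_mul_expansionTerm (N n : ℕ) (ξ : ℕ → ℝ) (l : ℂ) {s : Finset ℕ}
    (hs : s ⊆ Icc 1 N) :
    (1 / 2) ^ N * expansionTerm (fun i => (-1) ^ i * (-2 * l))
        ((fun i => Complex.exp (-(n * ξ i))) ^ 2) ((fun i => Complex.exp (n * ξ i)) ^ 2)
        (Icc 1 N) s =
      (-1) ^ (N / 2) * (l ^ (N - #s) / (-2) ^ #s * (((-1 : ℝ) ^ (∑ i ∈ s, i) *
        Real.exp (2 * n * ∑ i ∈ s, (-1 : ℝ) ^ #{j ∈ s | j ≤ i} * ξ i) : ℝ) : ℂ)) := by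
  have card_le : #s ≤ N := by simpa using card_le_card hs
  have half_pow_mul : (1 / 2 : ℂ) ^ N * (-2) ^ (N - #s) = (-1) ^ N / (-2) ^ #s := by
    rw [pow_sub₀ _ (by norm_num) card_le, ← mul_assoc, ← mul_pow]
    norm_num [div_eq_mul_inv]
  rw [expansionTerm, prod_sdiff_neg_one_pow_mul _ hs, interleavedProd_sq_exp, Nat.card_Icc,
    Nat.add_sub_cancel, ← neg_one_pow_add_sum_Icc, pow_add, mul_pow, Complex.ofReal_mul,
    Complex.ofReal_pow, Complex.ofReal_neg, Complex.ofReal_one]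
  linear_combination (-1) ^ (∑ i ∈ Icc 1 N, i) * (-1) ^ (∑ i ∈ s, i) * l ^ (N - #s) *
    (Real.exp (2 * n * ∑ i ∈ s, (-1 : ℝ) ^ #{j ∈ s | j ≤ i} * ξ i) : ℂ) * half_pow_mul

theorem det_Ms_eq_general (N n : ℕ) (ξ : ℕ → ℝ) (l : ℂ) :
    (Ms n N ξ l).det =
      (-1 : ℂ) ^ (N / 2) *
        ∑ k ∈ Finset.range (N + 1),
          l ^ (N - k) / (-2) ^ k * ((sgnExpSum n ξ 1 N k : ℝ) : ℂ) := by
  rw [Ms_eq_smul_skewRankOneMatrix, Matrix.det_smul, Fintype.card_fin, det_skewRankOneMatrix,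
    one_mul, evenExpansion_add_oddExpansion, sum_powerset, Nat.card_Icc, Nat.add_sub_cancel,
    mul_sum, mul_sum]
  refine sum_congr rfl fun k _ => ?_
  rw [sgnExpSum, Complex.ofReal_sum, mul_sum, mul_sum, mul_sum]
  refine sum_congr rfl fun s hs => ?_
  obtain ⟨hsN, rfl⟩ := mem_powersetCard.1 hs
  exact half_pow_mul_expansionTerm N n ξ l hsN

end Polarization

/-- Explicit formula for the determinant of the `n`-order odd GPM. -/
theorem det_Ms_eq (N n : ℕ) (hN : 0 < N) (hn : 0 < n) (ξ : ℕ → ℝ)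
    (hξ : ∀ i j, 1 ≤ i → i < j → j ≤ N → ξ j < ξ i) (hpos : 0 < ξ N) (l : ℂ) :
    (Ms n N ξ l).det =
      (-1 : ℂ) ^ (N / 2) *
        ∑ k ∈ Finset.range (N + 1),
          l ^ (N - k) / (-2) ^ k * ((sgnExpSum n ξ 1 N k : ℝ) : ℂ) :=
  det_Ms_eq_general N n ξ l
end

section
/- For every 1 ≤ i ≤ N and every λ ∈ ℂ, with λ_p = (−1)^{p−1} λ, the determinant of the trailing submatrix M_{i:N,c} equals ε_{N,i} · Σ_{k=0}^{N+1−i} (λ^{N+1−i−k} / 2^k) · ( Σ_{i ≤ i_1 < ⋯ < i_k ≤ N} (−1)^{i_1+⋯+i_k} · exp(2 n Σ_{l=1}^{k} (−1)^l ξ_{i_l}) ), where ε_{N,i} = (−1)^{⌊(N+1−i)/2⌋} if N is odd and ε_{N,i} = (−1)^{i−1} (−1)^{⌊(N+1−i)/2⌋} if N is even; here for k = 0 the inner sum is 1. -/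
/-!
Multiplying row `p` and column `q` of the matrix by `e^{nξ_p}` and `e^{nξ_q}` leaves a matrix with
entries `λ_p z_p - t` on, `-t (z_q + 1)` above and `t (z_p - 1)` below the diagonal, where
`z_p = e^{2nξ_p}` and `t = 1/2`. Its first two rows agree from the third column on and its first two
columns from the third row on, so eliminating yields a three-term recursion for the determinants
`D_j` of the trailing blocks:
`D_j = (λ_j z_j + λ_{j+1} z_{j+1}) D_{j+1} + (t² - λ_{j+1}²) z_{j+1}² D_{j+2}`.

For arbitrary `λ_p`, this recursion is solved by `D_j = (∏_p z_p) F_j(z)`, where `F_j(z)` sums, over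
the sets `s` of indices `≥ j`, the product of `(-t)^{|s|}`, the `λ_p` with `p ∉ s`, and the `z_p`
with `p ∈ s` raised to the alternating powers `-1, 1, -1, …`. Deciding whether `j ∈ s` gives
`F_j(z) = λ_j F_{j+1}(z) - t z_j⁻¹ F_{j+1}(z⁻¹)`, and eliminating `F(z⁻¹)` between consecutive
instances is the recursion. For `λ_p = (-1)^{p-1} λ`, the signs of the `λ_p` with `p ∉ s` and of
`(-t)^{|s|}` combine to `ε_{N,j} (-1)^{Σ s}`.
-/

open Finset

/-- The trailing submatrix `M_{i:N,c}` with rows and columns indexed by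
`p, q ∈ {i, …, N}` (realized as `p = i + a` for `a : Fin (N+1−i)`):
the `(p,p)` entry is `(−1)^{p−1} λ − (1/2) e^{−2nξ_p}`, the `(p,q)` entry for
`p < q` is `−cosh(nξ_q) e^{−nξ_p}`, and for `p > q` it is `sinh(nξ_p) e^{−nξ_q}`. -/
noncomputable def McSub (n N : ℕ) (ξ : ℕ → ℝ) (l : ℂ) (i : ℕ) :
    Matrix (Fin (N + 1 - i)) (Fin (N + 1 - i)) ℂ :=
  fun a b =>
    if a = b then
      (-1 : ℂ) ^ (i + (a : ℕ) - 1) * l -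
        ((Real.exp (-(2 * n * ξ (i + (a : ℕ)))) / 2 : ℝ) : ℂ)
    else if a < b then
      -(((Real.cosh (n * ξ (i + (b : ℕ))) * Real.exp (-(n * ξ (i + (a : ℕ))))) : ℝ) : ℂ)
    else
      (((Real.sinh (n * ξ (i + (a : ℕ))) * Real.exp (-(n * ξ (i + (b : ℕ))))) : ℝ) : ℂ)

section Determinant

variable {R : Type*} [CommRing R]

lemma det_of_first_row_column_eq_zero {m : ℕ} (M : Matrix (Fin (m + 2)) (Fin (m + 2)) R)
    (hrow : ∀ k : Fin m, M 0 k.succ.succ = 0) (hcol : ∀ k : Fin m, M k.succ.succ 0 = 0) :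
    M.det = M 0 0 * (M.submatrix Fin.succ Fin.succ).det -
      M 0 1 * M 1 0 * (M.submatrix (Fin.succ ∘ Fin.succ) (Fin.succ ∘ Fin.succ)).det := by
  have minor_zero_one : (M.submatrix Fin.succ (Fin.succAbove 1)).det =
      M 1 0 * (M.submatrix (Fin.succ ∘ Fin.succ) (Fin.succ ∘ Fin.succ)).det := by
    rw [Matrix.det_succ_column_zero, Fin.sum_univ_succ,
      Finset.sum_eq_zero fun k _ => by simp [hcol]]
    simp [Matrix.submatrix_submatrix, Function.comp_def]
  rw [Matrix.det_succ_row_zero, Fin.sum_univ_succ, Fin.sum_univ_succ,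
    Finset.sum_eq_zero fun k _ => by simp [hrow], Fin.succ_zero_eq_one, minor_zero_one]
  simp only [Fin.val_zero, Fin.val_one, pow_zero, pow_one, one_mul, Fin.succAbove_zero, add_zero]
  ring

lemma det_of_first_two_rows_columns_eq {m : ℕ} (M : Matrix (Fin (m + 2)) (Fin (m + 2)) R)
    (hrow : ∀ k : Fin m, M 0 k.succ.succ = M 1 k.succ.succ)
    (hcol : ∀ k : Fin m, M k.succ.succ 0 = M k.succ.succ 1) :
    M.det = (M 0 0 - M 1 0 - M 0 1 + M 1 1) * (M.submatrix Fin.succ Fin.succ).det -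
      (M 0 1 - M 1 1) * (M 1 0 - M 1 1) *
        (M.submatrix (Fin.succ ∘ Fin.succ) (Fin.succ ∘ Fin.succ)).det := by
  let M₁ := M.updateRow 0 (M 0 + (-1 : R) • M 1)
  let M₂ := M₁.updateCol 0 fun k => M₁ k 0 + (-1 : R) • M₁ k 1
  have det_eq : M₂.det = M.det :=
    (M₁.det_updateCol_add_smul_self zero_ne_one _).trans
      (M.det_updateRow_add_smul_self zero_ne_one _)
  have minor_eq : M₂.submatrix Fin.succ Fin.succ = M.submatrix Fin.succ Fin.succ := by
    ext a b
    simp [M₂, M₁]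
  have minor_minor_eq : M₂.submatrix (Fin.succ ∘ Fin.succ) (Fin.succ ∘ Fin.succ) =
      M.submatrix (Fin.succ ∘ Fin.succ) (Fin.succ ∘ Fin.succ) := by
    ext a b
    simp [M₂, M₁]
  rw [← det_eq, det_of_first_row_column_eq_zero M₂, minor_eq, minor_minor_eq]
  · simp only [M₂, M₁, Matrix.updateRow_apply, Matrix.updateCol_self, Matrix.updateCol_ne, ne_eq,
      one_ne_zero, not_false_eq_true, ↓reduceIte, Pi.add_apply, Pi.smul_apply, smul_eq_mul]
    ring
  · intro k
    simp [M₂, M₁, hrow]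
  · intro k
    simp [M₂, M₁, hcol]

/-- The trailing block of size `m`, with rows and columns indexed by `p, q ∈ {j, …, j + m - 1}`, of
the matrix that `M_{i:N,c}` becomes after its rows and columns are rescaled. Here `c p` stands for
`λ_p`, `z p` for `e^{2nξ_p}` and `t` for `1/2`. -/
def scaledMatrix (t : R) (c z : ℕ → R) (j m : ℕ) : Matrix (Fin m) (Fin m) R :=
  Matrix.of fun a b =>
    if a = b then c (j + a) * z (j + a) - t
    else if a < b then -t * (z (j + b) + 1)
    else t * (z (j + a) - 1)

lemma scaledMatrix_submatrix_succ (t : R) (c z : ℕ → R) (j m : ℕ) :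
    (scaledMatrix t c z j (m + 1)).submatrix Fin.succ Fin.succ = scaledMatrix t c z (j + 1) m := by
  ext a b
  simp [scaledMatrix, add_assoc, add_comm (1 : ℕ)]

lemma det_scaledMatrix_add_two (t : R) (c z : ℕ → R) (j m : ℕ) :
    (scaledMatrix t c z j (m + 2)).det =
      (c j * z j + c (j + 1) * z (j + 1)) * (scaledMatrix t c z (j + 1) (m + 1)).det +
        (t ^ 2 - c (j + 1) ^ 2) * z (j + 1) ^ 2 * (scaledMatrix t c z (j + 2) m).det := by
  have one_lt (k : Fin m) : (1 : Fin (m + 2)) < k.succ.succ := by simp [Fin.lt_def]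
  have submatrix_succ_succ :
      (scaledMatrix t c z j (m + 2)).submatrix (Fin.succ ∘ Fin.succ) (Fin.succ ∘ Fin.succ) =
        scaledMatrix t c z (j + 2) m := by
    rw [← Matrix.submatrix_submatrix, scaledMatrix_submatrix_succ, scaledMatrix_submatrix_succ]
  rw [det_of_first_two_rows_columns_eq, scaledMatrix_submatrix_succ, submatrix_succ_succ]
  · simp only [scaledMatrix, Matrix.of_apply, ↓reduceIte, Fin.val_zero, Fin.val_one, add_zero,
      one_ne_zero, zero_ne_one, not_lt_zero, zero_lt_one]
    ring
  · intro k
    simp [scaledMatrix, one_lt, (one_lt k).ne, (Fin.succ_ne_zero k.succ).symm]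
  · intro k
    simp [scaledMatrix, (one_lt k).ne', (one_lt k).not_gt]

end Determinant

section AlternatingSums

variable {ι : Type*} [LinearOrder ι] {R : Type*} [CommRing R]

/-- The product `u_{i_1}⁻¹ u_{i_2} u_{i_3}⁻¹ ⋯` over the elements `i_1 < i_2 < ⋯` of `s`; as in
`sgnExpSum`, the position of `i` in `s` is the number of elements up to `i`. -/
def altProd {G : Type*} [DivisionCommMonoid G] (u : ι → G) (s : Finset ι) : G :=
  ∏ i ∈ s, u i ^ ((-1 : ℤ) ^ #(s.filter (· ≤ i)))

lemma altProd_insert_of_forall_lt {G : Type*} [DivisionCommMonoid G] (u : ι → G) {j : ι}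
    {s : Finset ι} (hj : ∀ i ∈ s, j < i) :
    altProd u (insert j s) = (u j)⁻¹ * altProd u⁻¹ s := by
  have notMem : j ∉ s := fun h => (hj j h).false
  have filter_le_self : s.filter (· ≤ j) = ∅ := filter_eq_empty_iff.2 fun i hi => (hj i hi).not_ge
  rw [altProd, prod_insert notMem, filter_insert, if_pos le_rfl, filter_le_self, altProd]
  congr 1
  · simp
  · refine prod_congr rfl fun i hi => ?_
    rw [filter_insert, if_pos (hj i hi).le, card_insert_of_notMem (by simp [notMem]), pow_succ,
      mul_neg_one, zpow_neg, Pi.inv_apply, inv_zpow]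

/-- The sum `F(z)` over the subsets of `S`; for an interval `S` it is the determinant of the
corresponding block `scaledMatrix t c z`, divided by the product of the `z p` with `p ∈ S`. -/
def altSubsetSum (t : R) (c : ι → R) (z : ι → Rˣ) (S : Finset ι) : R :=
  ∑ s ∈ S.powerset, (-t) ^ #s * (∏ p ∈ S \ s, c p) * (altProd z s : Rˣ)

lemma altSubsetSum_empty (t : R) (c : ι → R) (z : ι → Rˣ) : altSubsetSum t c z ∅ = 1 := by
  simp [altSubsetSum, altProd]

lemma altSubsetSum_insert_of_forall_lt (t : R) (c : ι → R) (z : ι → Rˣ) {j : ι} {S : Finset ι}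
    (hj : ∀ i ∈ S, j < i) :
    altSubsetSum t c z (insert j S) =
      c j * altSubsetSum t c z S - t * ((z j)⁻¹ : Rˣ) * altSubsetSum t c z⁻¹ S := by
  have notMem : j ∉ S := fun h => (hj j h).false
  simp only [altSubsetSum]
  rw [sum_powerset_insert notMem, mul_sum, mul_sum, sub_eq_add_neg, ← sum_neg_distrib]
  congr 1
  · refine sum_congr rfl fun s hs => ?_
    have notMem_s : j ∉ s := fun h => notMem (mem_powerset.1 hs h)
    rw [insert_sdiff_of_notMem S notMem_s, prod_insert (by simp [notMem])]
    ring
  · refine sum_congr rfl fun s hs => ?_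
    have hjs : ∀ i ∈ s, j < i := fun i hi => hj i (mem_powerset.1 hs hi)
    rw [altProd_insert_of_forall_lt z hjs, card_insert_of_notMem fun h => (hjs j h).false,
      insert_sdiff_insert, sdiff_insert_of_notMem notMem, Units.val_mul]
    ring

lemma altSubsetSum_Ico (t : R) (c : ℕ → R) (z : ℕ → Rˣ) {j k : ℕ} (hjk : j < k) :
    altSubsetSum t c z (Ico j k) = c j * altSubsetSum t c z (Ico (j + 1) k) -
      t * ((z j)⁻¹ : Rˣ) * altSubsetSum t c z⁻¹ (Ico (j + 1) k) := by
  rw [← insert_Ico_add_one_left_eq_Ico hjk, altSubsetSum_insert_of_forall_lt]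
  exact fun i hi => (mem_Ico.1 hi).1

theorem det_scaledMatrix (t : R) (c : ℕ → R) (z : ℕ → Rˣ) {j m k : ℕ} (hk : j + m = k) :
    (scaledMatrix t c (fun p => z p) j m).det =
      (∏ p ∈ Ico j k, (z p : R)) * altSubsetSum t c z (Ico j k) := by
  induction m using Nat.twoStepInduction generalizing j with
  | zero => simp [← hk, altSubsetSum_empty]
  | one =>
    subst hk
    rw [altSubsetSum_Ico t c z j.lt_succ_self]
    simp only [Ico_self, altSubsetSum_empty, Nat.Ico_succ_singleton, prod_singleton,
      Matrix.det_fin_one, scaledMatrix, Matrix.of_apply, if_true, Fin.val_zero, add_zero]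
    linear_combination t * (z j).mul_inv
  | more m ih ih_succ =>
    have hj : j < k := by omega
    have hj' : j + 1 < k := by omega
    rw [det_scaledMatrix_add_two, ih_succ (j := j + 1) (by omega), ih (j := j + 2) (by omega),
      prod_eq_prod_Ico_succ_bot hj, prod_eq_prod_Ico_succ_bot hj', altSubsetSum_Ico t c z hj]
    have hF := altSubsetSum_Ico t c z hj'
    have hG := altSubsetSum_Ico t c z⁻¹ hj'
    simp only [Pi.inv_apply, inv_inv] at hG
    set P := ∏ p ∈ Ico (j + 1 + 1) k, (z p : R)
    set F := altSubsetSum t c z (Ico (j + 1 + 1) k)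
    set G := altSubsetSum t c z⁻¹ (Ico (j + 1 + 1) k)
    rw [hF, hG]
    linear_combination t * z (j + 1) * P * (c (j + 1) * G - t * z (j + 1) * F) * (z j).mul_inv -
      t * c (j + 1) * z (j + 1) * P * G * (z (j + 1)).mul_inv

end AlternatingSums

section Signs

variable {R : Type*} [CommRing R]

lemma prod_range_neg_one_pow (m : ℕ) : ∏ a ∈ range m, (-1 : R) ^ a = (-1) ^ (m / 2) := by
  induction m using Nat.twoStepInduction with
  | zero => simp
  | one => simp
  | more m ih _ =>
    rw [prod_range_succ, prod_range_succ, ih, mul_assoc, ← pow_add, Nat.add_div_right m two_pos,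
      pow_succ, Odd.neg_one_pow (n := m + (m + 1)) ⟨m, by ring⟩]

lemma prod_Ico_neg_one_pow_pred {i N : ℕ} (hi : 1 ≤ i) (hiN : i ≤ N + 1) :
    ∏ p ∈ Ico i (N + 1), (-1 : R) ^ (p - 1) =
      if Odd N then (-1) ^ ((N + 1 - i) / 2) else (-1) ^ (i - 1) * (-1) ^ ((N + 1 - i) / 2) := by
  obtain ⟨b, rfl⟩ := Nat.exists_eq_add_of_le' hi
  obtain ⟨m, rfl⟩ := Nat.exists_eq_add_of_le' (Nat.le_of_add_le_add_right hiN)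
  have shift (a : ℕ) : (-1 : R) ^ (b + 1 + a - 1) = (-1) ^ b * (-1) ^ a := by
    rw [← pow_add]
    congr 1
    omega
  have length : m + b + 1 - (b + 1) = m := by omega
  have parity : ((-1 : R) ^ b) ^ m = if Odd (m + b) then 1 else (-1) ^ b := by
    rw [← pow_mul]
    split_ifs with hodd
    · exact Even.neg_one_pow (by grind)
    · exact neg_one_pow_congr (by grind)
  rw [prod_Ico_eq_prod_range, length, prod_congr rfl fun a _ => shift a, prod_mul_distrib,
    prod_range_neg_one_pow, prod_const, card_range, Nat.add_sub_cancel, parity, ite_mul, one_mul]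

lemma neg_one_pow_card_mul_prod_sdiff {S s : Finset ℕ} (hS : ∀ p ∈ S, 1 ≤ p) (hs : s ⊆ S) :
    (-1 : R) ^ #s * ∏ p ∈ S \ s, (-1 : R) ^ (p - 1) =
      (∏ p ∈ S, (-1) ^ (p - 1)) * (-1) ^ ∑ p ∈ s, p := by
  have cancel : ∀ p ∈ s, (-1 : R) = (-1) ^ (p - 1) * (-1) ^ p := fun p hp => by
    rw [← pow_add, Odd.neg_one_pow ⟨p - 1, by have := hS p (hs hp); omega⟩]
  rw [← prod_sdiff hs, ← prod_pow_eq_pow_sum, mul_assoc, ← prod_mul_distrib, mul_comm,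
    ← prod_const, prod_congr rfl cancel]

lemma altSubsetSum_neg_one_pow_mul (t l : R) (z : ℕ → Rˣ) {S : Finset ℕ} (hS : ∀ p ∈ S, 1 ≤ p) :
    altSubsetSum t (fun p => (-1) ^ (p - 1) * l) z S =
      (∏ p ∈ S, (-1) ^ (p - 1)) *
        ∑ s ∈ S.powerset, l ^ (#S - #s) * t ^ #s * ((-1) ^ (∑ p ∈ s, p) * (altProd z s : Rˣ)) := by
  rw [altSubsetSum, mul_sum]
  refine sum_congr rfl fun s hs => ?_
  have hsS : s ⊆ S := mem_powerset.1 hs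
  rw [prod_mul_distrib, prod_const, card_sdiff_of_subset hsS, neg_pow t]
  linear_combination t ^ #s * l ^ (#S - #s) * (altProd z s : Rˣ) *
    neg_one_pow_card_mul_prod_sdiff (R := R) hS hsS

end Signs

/-- The complex exponential as a unit of `ℂ`, so that `altSubsetSum` applies to `e^{2nξ_p}`. -/
noncomputable def expUnit (x : ℂ) : ℂˣ :=
  Units.mk0 (Complex.exp x) x.exp_ne_zero

lemma coe_expUnit (x : ℂ) : (expUnit x : ℂ) = Complex.exp x := rfl

lemma coe_altProd_expUnit {ι : Type*} [LinearOrder ι] (x : ι → ℂ) (s : Finset ι) :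
    (altProd (fun i => expUnit (x i)) s : ℂˣ) =
      Complex.exp (∑ i ∈ s, (-1) ^ #(s.filter (· ≤ i)) * x i) := by
  rw [altProd, Units.coe_prod, Complex.exp_sum]
  refine prod_congr rfl fun i _ => ?_
  rw [Units.val_zpow_eq_zpow_val, coe_expUnit, ← Complex.exp_int_mul]
  push_cast
  rfl

lemma McSub_eq_diagonal_mul_scaledMatrix (n N : ℕ) (ξ : ℕ → ℝ) (l : ℂ) (i : ℕ) :
    McSub n N ξ l i =
      Matrix.diagonal (fun a : Fin (N + 1 - i) => Complex.exp (-(n * ξ (i + a)))) *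
        scaledMatrix (1 / 2) (fun p => (-1) ^ (p - 1) * l) (fun p => expUnit (2 * n * ξ p)) i
          (N + 1 - i) *
        Matrix.diagonal fun a : Fin (N + 1 - i) => Complex.exp (-(n * ξ (i + a))) := by
  have exp_two_mul (p : ℕ) : Complex.exp (2 * n * ξ p) = Complex.exp (n * ξ p) ^ 2 := by
    rw [← Complex.exp_nat_mul]
    push_cast
    ring_nf
  ext a b
  simp only [McSub, scaledMatrix, Matrix.mul_diagonal, Matrix.diagonal_mul, Matrix.of_apply,
    coe_expUnit]
  push_cast [Complex.cosh, Complex.sinh]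
  simp only [Complex.exp_neg, exp_two_mul]
  split_ifs with hab
  · subst hab
    field_simp
  · field_simp
  · field_simp

lemma det_McSub_eq_altSubsetSum (n N : ℕ) (ξ : ℕ → ℝ) (l : ℂ) {i : ℕ} (hiN : i ≤ N + 1) :
    (McSub n N ξ l i).det =
      altSubsetSum (1 / 2) (fun p => (-1) ^ (p - 1) * l) (fun p => expUnit (2 * n * ξ p))
        (Ico i (N + 1)) := by
  have prod_diagonal : (∏ a : Fin (N + 1 - i), Complex.exp (-(n * ξ (i + a)))) ^ 2 *
      ∏ p ∈ Ico i (N + 1), (expUnit (2 * n * ξ p) : ℂ) = 1 := by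
    rw [prod_Ico_eq_prod_range, ← Fin.prod_univ_eq_prod_range fun a =>
      (expUnit (2 * n * ξ (i + a)) : ℂ), ← prod_pow, ← prod_mul_distrib]
    refine prod_eq_one fun a _ => ?_
    rw [coe_expUnit, ← Complex.exp_nat_mul, ← Complex.exp_add]
    convert Complex.exp_zero using 2
    push_cast
    ring
  rw [McSub_eq_diagonal_mul_scaledMatrix, Matrix.det_mul, Matrix.det_mul, Matrix.det_diagonal,
    det_scaledMatrix _ _ _ (Nat.add_sub_of_le hiN)]
  linear_combination altSubsetSum (1 / 2) (fun p => (-1) ^ (p - 1) * l)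
    (fun p => expUnit (2 * n * ξ p)) (Ico i (N + 1)) * prod_diagonal

lemma sgnExpSum_eq_sum_altProd (n : ℕ) (ξ : ℕ → ℝ) (lo hi k : ℕ) :
    (sgnExpSum n ξ lo hi k : ℂ) = ∑ s ∈ (Icc lo hi).powersetCard k,
      (-1) ^ (∑ p ∈ s, p) * ((altProd (fun p => expUnit (2 * n * ξ p)) s : ℂˣ) : ℂ) := by
  rw [sgnExpSum, Complex.ofReal_sum]
  refine sum_congr rfl fun s _ => ?_
  rw [coe_altProd_expUnit]
  push_cast [mul_sum]
  simp only [mul_left_comm]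

lemma sum_sgnExpSum_eq_sum_powerset (n : ℕ) (ξ : ℕ → ℝ) (l : ℂ) (lo hi : ℕ) :
    ∑ k ∈ range (hi + 1 - lo + 1), l ^ (hi + 1 - lo - k) / 2 ^ k * (sgnExpSum n ξ lo hi k : ℂ) =
      ∑ s ∈ (Icc lo hi).powerset, l ^ (hi + 1 - lo - #s) * (1 / 2) ^ #s *
        ((-1) ^ (∑ p ∈ s, p) * ((altProd (fun p => expUnit (2 * n * ξ p)) s : ℂˣ) : ℂ)) := by
  rw [sum_powerset, Nat.card_Icc]
  refine sum_congr rfl fun k _ => ?_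
  rw [sgnExpSum_eq_sum_altProd, mul_sum]
  refine sum_congr rfl fun s hs => ?_
  rw [(mem_powersetCard.1 hs).2, one_div, inv_pow, div_eq_mul_inv]

theorem det_McSub_eq_general (N n : ℕ) (ξ : ℕ → ℝ) (i : ℕ) (hi1 : 1 ≤ i) (hiN : i ≤ N + 1)
    (l : ℂ) :
    (McSub n N ξ l i).det =
      (if Odd N then (-1 : ℂ) ^ ((N + 1 - i) / 2)
        else (-1 : ℂ) ^ (i - 1) * (-1 : ℂ) ^ ((N + 1 - i) / 2)) *
        ∑ k ∈ Finset.range (N + 1 - i + 1),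
          l ^ (N + 1 - i - k) / 2 ^ k * ((sgnExpSum n ξ i N k : ℝ) : ℂ) := by
  have one_le : ∀ p ∈ Ico i (N + 1), 1 ≤ p := fun p hp => hi1.trans (mem_Ico.1 hp).1
  rw [det_McSub_eq_altSubsetSum n N ξ l hiN, altSubsetSum_neg_one_pow_mul _ _ _ one_le,
    prod_Ico_neg_one_pow_pred hi1 hiN, sum_sgnExpSum_eq_sum_powerset, Nat.card_Ico,
    Ico_add_one_right_eq_Icc]

/-- Explicit formula for the determinant of the trailing submatrix `M_{i:N,c}`. -/
theorem det_McSub_eq (N n : ℕ) (hN : 0 < N) (hn : 0 < n) (ξ : ℕ → ℝ)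
    (hξ : ∀ i j, 1 ≤ i → i < j → j ≤ N → ξ j < ξ i) (hpos : 0 < ξ N)
    (i : ℕ) (hi1 : 1 ≤ i) (hiN : i ≤ N) (l : ℂ) :
    (McSub n N ξ l i).det =
      (if Odd N then (-1 : ℂ) ^ ((N + 1 - i) / 2)
        else (-1 : ℂ) ^ (i - 1) * (-1 : ℂ) ^ ((N + 1 - i) / 2)) *
        ∑ k ∈ Finset.range (N + 1 - i + 1),
          l ^ (N + 1 - i - k) / 2 ^ k * ((sgnExpSum n ξ i N k : ℝ) : ℂ) :=
  det_McSub_eq_general N n ξ i hi1 (hiN.trans N.le_succ) l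
end

section
/- Every complex root z of f_N^+ is real and lies in the interval [−1/2, 1/2], i.e. Im z = 0 and −1/2 ≤ Re z ≤ 1/2; the same holds for every complex root of f_N^−. In particular, since f_N^+ and f_N^− are monic polynomials of degree N, each of them has exactly N real roots in [−1/2, 1/2] counted with multiplicity. -/
/-!
Let `w s` be the weight of `s` in `sgnExpSum n ξ`, put `x i = 2 * n * ξ i`, and let `F b` be the
generating function `∑ s, w s * t ^ #s` over `s ⊆ {1, …, m}`, with the terms of odd `#s` multiplied
by `b`. Enlarging `m` to `m + 1` multiplies `F b` by `1 + (-1) ^ (m + 1) * t` when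
`b = exp (x (m + 1))`, and by `1 - (-1) ^ (m + 1) * t` when `b = -exp (x (m + 1))`. So at the scale
`b = exp (x (m + 1))` the ratio `F (-b) / F b` is multiplied by `u` or by `u⁻¹` alternately, where
`u = (1 - t) / (1 + t)`. Lowering the scale from `a` to `b ≤ a`, which is where the monotonicity of
`x` enters, transforms the ratio by a map `q ↦ (c * q + d) / (c + d * q)` with `0 ≤ d < c`.

If `t` is not a real number of absolute value at least `1`, then `u` is off the closed negative
real axis, and the cones spanned by `{1, u}` and `{1, u⁻¹}` contain no negative real number, so
that `c + d * q ≠ 0` for `q` in them. The maps lowering the scale preserve every convex cone that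
contains `1`, while multiplication by `u` and `u⁻¹` exchanges these two cones. Hence the ratio
stays in one of them and `F b` does not vanish for any scale `b > 0` not exceeding any
`exp (x i)`. At `b = 1` and `t = (e * z)⁻¹`, this is the value of the polynomial at `z`, up to the
factor `z ^ N`.
-/

open Finset Polynomial

/-- The polynomial `f_N^±(λ) = Σ_{k=0}^{N} (λ^{N−k} / e^k) · sgnExpSum k`,
where `e = 2` gives `f_N^+` and `e = −2` gives `f_N^−`. -/
noncomputable def fPoly (n N : ℕ) (ξ : ℕ → ℝ) (e : ℝ) : Polynomial ℂ :=
  ∑ k ∈ Finset.range (N + 1),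
    Polynomial.C (((sgnExpSum n ξ 1 N k : ℝ) : ℂ) / (e : ℂ) ^ k) * Polynomial.X ^ (N - k)

section AlternatingSums

/-- The weight of the subset `s` in `sgnExpSum n ξ`, written in terms of the exponents
`x i = 2 * n * ξ i`. -/
noncomputable def altWeight (x : ℕ → ℝ) (s : Finset ℕ) : ℝ :=
  (-1) ^ (∑ i ∈ s, i) * Real.exp (∑ i ∈ s, (-1) ^ #{j ∈ s | j ≤ i} * x i)

/-- The generating function of the weights of the subsets of `{1, …, m}` by cardinality, evaluated
at `t`, with its odd part scaled by `b`. -/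
noncomputable def altGenFun (x : ℕ → ℝ) (m : ℕ) (t b : ℂ) : ℂ :=
  ∑ s ∈ (Icc 1 m).powerset, altWeight x s * t ^ #s * if Even #s then 1 else b

lemma sgnExpSum_eq_sum_altWeight (n : ℕ) (ξ : ℕ → ℝ) (lo hi k : ℕ) :
    sgnExpSum n ξ lo hi k =
      ∑ s ∈ (Icc lo hi).powersetCard k, altWeight (fun i ↦ 2 * n * ξ i) s := by
  simp only [sgnExpSum, altWeight, mul_sum, mul_left_comm]

lemma altWeight_insert_of_lt (x : ℕ → ℝ) {s : Finset ℕ} {m : ℕ} (hs : ∀ i ∈ s, i < m) :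
    altWeight x (insert m s) =
      (-1) ^ m * Real.exp ((-1) ^ (#s + 1) * x m) * altWeight x s := by
  have hm : m ∉ s := fun h ↦ (hs m h).false
  have position_top : {j ∈ insert m s | j ≤ m} = insert m s :=
    filter_true_of_mem <| forall_mem_insert _ _ _ |>.mpr ⟨le_rfl, fun i hi ↦ (hs i hi).le⟩
  have position_old : ∀ i ∈ s, {j ∈ insert m s | j ≤ i} = {j ∈ s | j ≤ i} := fun i hi ↦ by
    rw [filter_insert, if_neg (hs i hi).not_ge]
  have exponent_old : ∑ i ∈ s, (-1) ^ #{j ∈ insert m s | j ≤ i} * x i =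
      ∑ i ∈ s, (-1) ^ #{j ∈ s | j ≤ i} * x i :=
    sum_congr rfl fun i hi ↦ by rw [position_old i hi]
  rw [altWeight, sum_insert hm, sum_insert hm, position_top, exponent_old,
    card_insert_of_notMem hm, pow_add, Real.exp_add, altWeight]
  ring

lemma altGenFun_zero (x : ℕ → ℝ) (t b : ℂ) : altGenFun x 0 t b = 1 := by
  simp [altGenFun, altWeight]

lemma altGenFun_succ (x : ℕ → ℝ) (m : ℕ) (t : ℂ) {σ : ℂ} (hσ : σ ^ 2 = 1) :
    altGenFun x (m + 1) t (σ * Real.exp (x (m + 1))) =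
      (1 + σ * ((-1) ^ (m + 1) * t)) * altGenFun x m t (σ * Real.exp (x (m + 1))) := by
  have hm : m + 1 ∉ Icc 1 m := by simp
  rw [altGenFun, ← insert_Icc_right_eq_Icc_add_one (by omega), sum_powerset_insert hm, add_mul,
    one_mul, altGenFun, mul_sum]
  congr 1
  refine sum_congr rfl fun s hs ↦ ?_
  have hs : ∀ i ∈ s, i < m + 1 := fun i hi ↦
    Nat.lt_succ_of_le (mem_Icc.mp (mem_powerset.mp hs hi)).2
  rw [altWeight_insert_of_lt x hs, card_insert_of_notMem fun h ↦ (hs _ h).false]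
  rcases Nat.even_or_odd #s with heven | hodd
  · have hexp : (Real.exp (-x (m + 1)) : ℂ) * Real.exp (x (m + 1)) = 1 := by
      rw [← Complex.ofReal_mul, ← Real.exp_add, neg_add_cancel, Real.exp_zero, Complex.ofReal_one]
    rw [if_pos heven, if_neg (Nat.not_even_iff_odd.mpr heven.add_one), heven.add_one.neg_one_pow,
      neg_one_mul]
    push_cast [-Complex.ofReal_exp]
    linear_combination σ * (-1) ^ (m + 1) * altWeight x s * t ^ (#s + 1) * hexp
  · rw [if_neg (Nat.not_even_iff_odd.mpr hodd), if_pos hodd.add_one, hodd.add_one.neg_one_pow,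
      one_mul]
    push_cast [-Complex.ofReal_exp]
    linear_combination -(-1) ^ (m + 1) * Real.exp (x (m + 1)) * altWeight x s * t ^ (#s + 1) * hσ

/-- `altGenFun` is affine in the scale `b`, so its values at `a` and `-a` determine the others. -/
lemma two_mul_altGenFun (x : ℕ → ℝ) (m : ℕ) (t a b : ℂ) :
    2 * a * altGenFun x m t b =
      (a + b) * altGenFun x m t a + (a - b) * altGenFun x m t (-a) := by
  simp only [altGenFun, mul_sum, ← sum_add_distrib]
  refine sum_congr rfl fun s _ ↦ ?_
  split_ifs <;> ring

end AlternatingSums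

section Sector

lemma ofReal_add_ofReal_mul_mem_slitPlane {α β : ℝ} {v : ℂ} (hα : 0 < α) (hβ : 0 ≤ β)
    (hv : v ∈ Complex.slitPlane) : (α + β * v : ℂ) ∈ Complex.slitPlane := by
  rw [Complex.mem_slitPlane_iff] at hv ⊢
  simp only [Complex.add_re, Complex.add_im, Complex.re_ofReal_mul, Complex.im_ofReal_mul,
    Complex.ofReal_re, Complex.ofReal_im, zero_add]
  rcases hβ.eq_or_lt with rfl | hβ
  · simp [hα]
  · exact hv.imp (fun h ↦ by positivity) (mul_ne_zero hβ.ne')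

lemma mul_add_div_add_mul_mem_of_one_mem {C : PointedCone ℝ ℂ} (hone : 1 ∈ C) {q : ℂ} (hq : q ∈ C)
    {c d : ℝ} (hd : 0 ≤ d) (hdc : d ≤ c) : (c * q + d) / (c + d * q) ∈ C := by
  set α := d * (c - d) * (1 + Complex.normSq q) + d ^ 2 * Complex.normSq (1 + q)
  have hα : 0 ≤ α := add_nonneg
    (mul_nonneg (mul_nonneg hd (sub_nonneg.mpr hdc))
      (add_nonneg zero_le_one (Complex.normSq_nonneg q)))
    (mul_nonneg (sq_nonneg d) (Complex.normSq_nonneg (1 + q)))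
  have hβ : 0 ≤ c ^ 2 - d ^ 2 := sub_nonneg.mpr (by gcongr)
  have numerator_eq : (c * q + d) * (starRingEnd ℂ) (c + d * q) =
      α • (1 : ℂ) + (c ^ 2 - d ^ 2) • q := by
    simp only [α, Complex.real_smul, Complex.ofReal_add, Complex.ofReal_mul, Complex.ofReal_sub,
      Complex.ofReal_pow, Complex.ofReal_one, Complex.normSq_eq_conj_mul_self, map_add, map_mul,
      map_one, Complex.conj_ofReal]
    ring
  have ratio_eq : (c * q + d) / (c + d * q) =
      (Complex.normSq (c + d * q))⁻¹ • (α • (1 : ℂ) + (c ^ 2 - d ^ 2) • q) := by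
    rw [← numerator_eq, div_eq_mul_inv, Complex.inv_def, Complex.real_smul]
    ring
  rw [ratio_eq]
  exact C.smul_mem (inv_nonneg.mpr (Complex.normSq_nonneg _))
    (C.add_mem (C.smul_mem hα hone) (C.smul_mem hβ hq))

/-- The sector of the complex plane spanned by `1` and `v` as a convex cone, in which the ratios
of values of `altGenFun` are confined. -/
noncomputable def sector (v : ℂ) : PointedCone ℝ ℂ :=
  PointedCone.hull ℝ {1, v}

lemma mem_sector {v q : ℂ} : q ∈ sector v ↔ ∃ α β : ℝ, 0 ≤ α ∧ 0 ≤ β ∧ α + β * v = q := by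
  simp only [sector, Submodule.mem_span_pair, Subtype.exists, Nonneg.mk_smul, Complex.real_smul,
    mul_one, exists_prop, exists_and_left]

lemma one_mem_sector (v : ℂ) : 1 ∈ sector v :=
  Submodule.subset_span (Set.mem_insert 1 {v})

lemma mul_mem_sector {v q : ℂ} (hv : v ≠ 0) (hq : q ∈ sector v⁻¹) : v * q ∈ sector v := by
  obtain ⟨α, β, hα, hβ, rfl⟩ := mem_sector.mp hq
  exact mem_sector.mpr ⟨β, α, hβ, hα, by field_simp; ring⟩

lemma add_ne_zero_of_mem_sector {v q : ℂ} (hv : v ∈ Complex.slitPlane) (hq : q ∈ sector v)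
    {c d : ℝ} (hc : 0 < c) (hd : 0 ≤ d) : c + d * q ≠ 0 := by
  obtain ⟨α, β, hα, hβ, rfl⟩ := mem_sector.mp hq
  have key := Complex.slitPlane_ne_zero <| ofReal_add_ofReal_mul_mem_slitPlane
    (show 0 < c + d * α by positivity) (mul_nonneg hd hβ) hv
  convert key using 1
  push_cast
  ring

end Sector

section Cayley

/-- The Cayley transform exchanging the unit disc and the right half-plane: the factor by which a
new index multiplies the ratio of the values of `altGenFun` at `-b` and `b`. -/
noncomputable def cayley (t : ℂ) : ℂ :=
  (1 - t) / (1 + t)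

lemma cayley_neg (t : ℂ) : cayley (-t) = (cayley t)⁻¹ := by
  rw [cayley, cayley, inv_div, sub_neg_eq_add, ← sub_eq_add_neg]

lemma cayley_mem_slitPlane {t : ℂ} (hadd : 1 + t ∈ Complex.slitPlane)
    (hsub : 1 - t ∈ Complex.slitPlane) : cayley t ∈ Complex.slitPlane := by
  have hnormSq : 0 < Complex.normSq (1 + t) :=
    Complex.normSq_pos.mpr (Complex.slitPlane_ne_zero hadd)
  have re_eq : (cayley t).re =
      ((1 - t.re) * (1 + t.re) - t.im ^ 2) / Complex.normSq (1 + t) := by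
    simp only [cayley, Complex.div_re, Complex.sub_re, Complex.add_re, Complex.sub_im,
      Complex.add_im, Complex.one_re, Complex.one_im]
    ring
  have im_eq : (cayley t).im = -2 * t.im / Complex.normSq (1 + t) := by
    simp only [cayley, Complex.div_im, Complex.sub_re, Complex.add_re, Complex.sub_im,
      Complex.add_im, Complex.one_re, Complex.one_im]
    ring
  rw [Complex.mem_slitPlane_iff, re_eq, im_eq]
  by_cases him : t.im = 0
  · have hlower : 0 < 1 + t.re := by simpa [Complex.mem_slitPlane_iff, him] using hadd
    have hupper : 0 < 1 - t.re := by simpa [Complex.mem_slitPlane_iff, him] using hsub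
    left
    rw [him, zero_pow two_ne_zero, sub_zero]
    positivity
  · right
    exact div_ne_zero (mul_ne_zero (by norm_num) him) hnormSq.ne'

lemma im_eq_zero_and_abs_re_le_one_of_inv {w : ℂ}
    (hw : ¬(1 + w⁻¹ ∈ Complex.slitPlane ∧ 1 - w⁻¹ ∈ Complex.slitPlane)) :
    w.im = 0 ∧ |w.re| ≤ 1 := by
  obtain ⟨r, hr, hr1⟩ : ∃ r : ℝ, w⁻¹ = r ∧ 1 ≤ |r| := by
    refine ⟨w⁻¹.re, ?_⟩
    simp only [not_and_or, Complex.mem_slitPlane_iff, not_or, not_not, not_lt, Complex.add_re,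
      Complex.sub_re, Complex.add_im, Complex.sub_im, Complex.one_re, Complex.one_im, zero_add,
      zero_sub, neg_eq_zero] at hw
    rcases hw with ⟨hre, him⟩ | ⟨hre, him⟩
    · exact ⟨Complex.ext rfl him, le_abs'.mpr (.inl (by linarith))⟩
    · exact ⟨Complex.ext rfl him, le_abs'.mpr (.inr (by linarith))⟩
  obtain rfl : w = (r⁻¹ : ℝ) := by rw [Complex.ofReal_inv, ← hr, inv_inv]
  refine ⟨Complex.ofReal_im _, ?_⟩
  rw [Complex.ofReal_re, abs_inv]
  exact inv_le_one_of_one_le₀ hr1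

end Cayley

section Nonvanishing

variable {x : ℕ → ℝ} {m : ℕ} {t : ℂ}

lemma altGenFun_ratio_mem_sector_of_le {v : ℂ} (hv : v ∈ Complex.slitPlane) {a b : ℝ}
    (hb : 0 < b) (hba : b ≤ a) (hne : altGenFun x m t a ≠ 0)
    (hratio : altGenFun x m t (-a) / altGenFun x m t a ∈ sector v) :
    altGenFun x m t b ≠ 0 ∧ altGenFun x m t (-b) / altGenFun x m t b ∈ sector v := by
  set q := altGenFun x m t (-a) / altGenFun x m t a with hq
  have hqa : altGenFun x m t (-a) = q * altGenFun x m t a := by rw [hq, div_mul_cancel₀ _ hne]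
  have ha : (2 * a : ℂ) ≠ 0 := by exact_mod_cast (mul_pos two_pos (hb.trans_le hba)).ne'
  have value_eq : 2 * a * altGenFun x m t b =
      (↑(a + b) + ↑(a - b) * q) * altGenFun x m t a := by
    rw [two_mul_altGenFun, hqa]
    push_cast
    ring
  have value_neg_eq : 2 * a * altGenFun x m t (-b) =
      (↑(a + b) * q + ↑(a - b)) * altGenFun x m t a := by
    rw [two_mul_altGenFun, hqa]
    push_cast
    ring
  have hden : (↑(a + b) + ↑(a - b) * q : ℂ) ≠ 0 :=
    add_ne_zero_of_mem_sector hv hratio (by linarith) (by linarith)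
  constructor
  · exact right_ne_zero_of_mul (value_eq ▸ mul_ne_zero hden hne)
  · rw [← mul_div_mul_left _ _ ha, value_eq, value_neg_eq, mul_div_mul_right _ _ hne]
    exact mul_add_div_add_mul_mem_of_one_mem (one_mem_sector v) hratio (by linarith) (by linarith)

lemma altGenFun_succ_ratio_mem_sector {τ : ℂ} (hτ : τ = (-1) ^ (m + 1) * t)
    (hadd : 1 + τ ∈ Complex.slitPlane) (hsub : 1 - τ ∈ Complex.slitPlane)
    (hne : altGenFun x m t (Real.exp (x (m + 1))) ≠ 0)
    (hratio : altGenFun x m t (-Real.exp (x (m + 1))) / altGenFun x m t (Real.exp (x (m + 1))) ∈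
      sector (cayley τ)⁻¹) :
    altGenFun x (m + 1) t (Real.exp (x (m + 1))) ≠ 0 ∧
      altGenFun x (m + 1) t (-Real.exp (x (m + 1))) /
        altGenFun x (m + 1) t (Real.exp (x (m + 1))) ∈ sector (cayley τ) := by
  have value_eq := altGenFun_succ x m t (one_pow 2)
  have value_neg_eq := altGenFun_succ x m t neg_one_sq
  rw [← hτ, one_mul, one_mul] at value_eq
  rw [← hτ, neg_one_mul, neg_one_mul, ← sub_eq_add_neg] at value_neg_eq
  rw [value_eq, value_neg_eq, mul_div_mul_comm, ← cayley]
  exact ⟨mul_ne_zero (Complex.slitPlane_ne_zero hadd) hne,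
    mul_mem_sector (Complex.slitPlane_ne_zero (cayley_mem_slitPlane hadd hsub)) hratio⟩

lemma altGenFun_ratio_mem_sector (hadd : 1 + t ∈ Complex.slitPlane)
    (hsub : 1 - t ∈ Complex.slitPlane) (hx : AntitoneOn x (Set.Icc 1 m)) {y : ℝ}
    (hy : ∀ i ∈ Set.Icc 1 m, y ≤ x i) :
    altGenFun x m t (Real.exp y) ≠ 0 ∧
      altGenFun x m t (-Real.exp y) / altGenFun x m t (Real.exp y) ∈
        sector (cayley ((-1) ^ m * t)) := by
  induction m generalizing y with
  | zero => simpa only [altGenFun_zero, div_one] using ⟨one_ne_zero, one_mem_sector _⟩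
  | succ m ih =>
    have hlast : m + 1 ∈ Set.Icc 1 (m + 1) := ⟨by omega, le_rfl⟩
    have hsubset : Set.Icc 1 m ⊆ Set.Icc 1 (m + 1) := Set.Icc_subset_Icc_right m.le_succ
    obtain ⟨hne, hratio⟩ := ih (hx.mono hsubset) (y := x (m + 1))
      fun i hi ↦ hx (hsubset hi) hlast (hi.2.trans m.le_succ)
    set τ : ℂ := (-1) ^ (m + 1) * t with hτ
    have hτ_slit : 1 + τ ∈ Complex.slitPlane ∧ 1 - τ ∈ Complex.slitPlane := by
      rcases neg_one_pow_eq_or ℂ (m + 1) with h | h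
      · simpa only [hτ, h, one_mul] using ⟨hadd, hsub⟩
      · simpa only [hτ, h, neg_one_mul, sub_neg_eq_add, ← sub_eq_add_neg] using ⟨hsub, hadd⟩
    have hpow : (-1) ^ m * t = -τ := by rw [hτ, pow_succ]; ring
    rw [hpow, cayley_neg] at hratio
    obtain ⟨hne, hratio⟩ :=
      altGenFun_succ_ratio_mem_sector hτ hτ_slit.1 hτ_slit.2 hne hratio
    exact altGenFun_ratio_mem_sector_of_le (cayley_mem_slitPlane hτ_slit.1 hτ_slit.2)
      (Real.exp_pos y) (Real.exp_le_exp.mpr (hy _ hlast)) hne hratio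

lemma altGenFun_one_ne_zero (hadd : 1 + t ∈ Complex.slitPlane)
    (hsub : 1 - t ∈ Complex.slitPlane) (hx : AntitoneOn x (Set.Icc 1 m))
    (hx0 : ∀ i ∈ Set.Icc 1 m, 0 ≤ x i) : altGenFun x m t 1 ≠ 0 := by
  simpa only [Real.exp_zero, Complex.ofReal_one] using
    (altGenFun_ratio_mem_sector hadd hsub hx hx0).1

end Nonvanishing

section Polynomials

variable (n N : ℕ) (ξ : ℕ → ℝ) (e : ℝ)

lemma eval_fPoly {z : ℂ} (hz : z ≠ 0) :
    (fPoly n N ξ e).eval z = z ^ N * altGenFun (fun i ↦ 2 * n * ξ i) N (e * z)⁻¹ 1 := by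
  simp only [fPoly, eval_finsetSum, eval_mul, eval_C, eval_pow, eval_X, altGenFun, ite_self,
    mul_one]
  rw [sum_powerset, Nat.card_Icc, Nat.add_sub_cancel, mul_sum]
  refine sum_congr rfl fun k hk ↦ ?_
  have powersetCard_sum : ∑ s ∈ (Icc 1 N).powersetCard k,
      (altWeight (fun i ↦ 2 * n * ξ i) s : ℂ) * (e * z)⁻¹ ^ #s =
        sgnExpSum n ξ 1 N k * (e * z)⁻¹ ^ k := by
    rw [sgnExpSum_eq_sum_altWeight, Complex.ofReal_sum, sum_mul]
    exact sum_congr rfl fun s hs ↦ by rw [(mem_powersetCard.mp hs).2]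
  rw [powersetCard_sum, pow_sub₀ z hz (mem_range_succ_iff.mp hk), inv_pow, mul_pow, mul_inv,
    div_eq_mul_inv]
  ring

lemma natDegree_fPoly_le : (fPoly n N ξ e).natDegree ≤ N :=
  natDegree_sum_le_of_forall_le _ _ fun k _ ↦
    (natDegree_C_mul_X_pow_le _ _).trans (N.sub_le k)

lemma coeff_fPoly_self : (fPoly n N ξ e).coeff N = 1 := by
  rw [fPoly, finsetSum_coeff, sum_eq_single 0]
  · simp [sgnExpSum]
  · intro k hk hk0
    have hkN := mem_range_succ_iff.mp hk
    exact (coeff_C_mul_X_pow _ _ _).trans (if_neg (by omega))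
  · simp

lemma card_roots_fPoly : Multiset.card (fPoly n N ξ e).roots = N := by
  rw [IsAlgClosed.card_roots_eq_natDegree]
  exact natDegree_eq_of_le_of_coeff_ne_zero (natDegree_fPoly_le n N ξ e)
    (coeff_fPoly_self n N ξ e ▸ one_ne_zero)

theorem roots_fPoly_real_mem_Icc_general (hξ : AntitoneOn ξ (Set.Icc 1 N))
    (hξ0 : ∀ i ∈ Set.Icc 1 N, 0 ≤ ξ i) (he : e ≠ 0) :
    (∀ z : ℂ, (fPoly n N ξ e).IsRoot z → z.im = 0 ∧ |z.re| ≤ |e|⁻¹) ∧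
      Multiset.card (fPoly n N ξ e).roots = N := by
  refine ⟨fun z hroot ↦ ?_, card_roots_fPoly n N ξ e⟩
  rcases eq_or_ne z 0 with rfl | hz
  · simp
  rw [IsRoot, eval_fPoly n N ξ e hz] at hroot
  have hvanish := (mul_eq_zero.mp hroot).resolve_left (pow_ne_zero N hz)
  have hx : AntitoneOn (fun i ↦ 2 * n * ξ i) (Set.Icc 1 N) := fun i hi j hj hij ↦
    mul_le_mul_of_nonneg_left (hξ hi hj hij) (by positivity)
  have hx0 : ∀ i ∈ Set.Icc 1 N, 0 ≤ 2 * n * ξ i := fun i hi ↦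
    mul_nonneg (by positivity) (hξ0 i hi)
  obtain ⟨him, hre⟩ : (e * z).im = 0 ∧ |(e * z).re| ≤ 1 :=
    im_eq_zero_and_abs_re_le_one_of_inv fun h ↦ altGenFun_one_ne_zero h.1 h.2 hx hx0 hvanish
  rw [Complex.im_ofReal_mul] at him
  rw [Complex.re_ofReal_mul, abs_mul] at hre
  refine ⟨(mul_eq_zero.mp him).resolve_left he, ?_⟩
  rwa [← one_div, le_div_iff₀' (abs_pos.mpr he)]

end Polynomials

/-- Every complex root of `f_N^+` (and of `f_N^−`) is real and lies in
`[−1/2, 1/2]`; moreover each of `f_N^+`, `f_N^−` has exactly `N` roots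
counted with multiplicity. -/
theorem roots_fPoly_real_mem_Icc (N n : ℕ) (hN : 0 < N) (hn : 0 < n) (ξ : ℕ → ℝ)
    (hξ : ∀ i j, 1 ≤ i → i < j → j ≤ N → ξ j < ξ i) (hpos : 0 < ξ N) :
    (∀ z : ℂ, (fPoly n N ξ 2).IsRoot z →
        z.im = 0 ∧ -(1 / 2) ≤ z.re ∧ z.re ≤ 1 / 2) ∧
      (∀ z : ℂ, (fPoly n N ξ (-2)).IsRoot z →
        z.im = 0 ∧ -(1 / 2) ≤ z.re ∧ z.re ≤ 1 / 2) ∧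
      Multiset.card (fPoly n N ξ 2).roots = N ∧
      Multiset.card (fPoly n N ξ (-2)).roots = N := by
  have hanti : AntitoneOn ξ (Set.Icc 1 N) := fun i hi j hj hij ↦
    hij.eq_or_lt.elim (fun h ↦ h ▸ le_rfl) fun h ↦ (hξ i j hi.1 h hj.2).le
  have hnonneg : ∀ i ∈ Set.Icc 1 N, 0 ≤ ξ i := fun i hi ↦
    hpos.le.trans (hanti hi ⟨hN, le_rfl⟩ hi.2)
  obtain ⟨hplus, hplus_card⟩ :=
    roots_fPoly_real_mem_Icc_general n N ξ 2 hanti hnonneg two_ne_zero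
  obtain ⟨hminus, hminus_card⟩ :=
    roots_fPoly_real_mem_Icc_general n N ξ (-2) hanti hnonneg (neg_ne_zero.mpr two_ne_zero)
  simp only [abs_neg, abs_two, abs_le, ← one_div] at hplus hminus
  exact ⟨hplus, hminus, hplus_card, hminus_card⟩
end

section
/- For every odd integer N ≥ 3 and every 1 ≤ k ≤ N−1: h_{N,k} = −h_{N−1,k−1} if k is odd, and h_{N,k} = h_{N−1,k} if k is even. -/
/-!
`h_{N,k}` is the `k`-th elementary symmetric function of the signs `(-1)^i`, `1 ≤ i ≤ N`. For even
`N` these signs form a multiset invariant under negation, and negating all entries multiplies the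
`k`-th elementary symmetric function by `(-1)^k`; so `h_{N,k} = 0` for even `N` and odd `k`.
For odd `N` the last sign is `-1`, whence `h_{N,k} = h_{N-1,k} - h_{N-1,k-1}`, and one of the two
terms on the right vanishes.
-/

open Finset

/-- The signed subset sum `h_{N,k} = Σ_{1 ≤ i_1 < ⋯ < i_k ≤ N} (−1)^{i_1+⋯+i_k}`,
with `h_{N,0} = 1`. -/
def hSgn (N k : ℕ) : ℤ :=
  ∑ s ∈ (Finset.Icc 1 N).powersetCard k, (-1 : ℤ) ^ (∑ i ∈ s, i)

theorem esymm_cons_succ {R : Type*} [CommSemiring R] (a : R) (s : Multiset R) (k : ℕ) :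
    (a ::ₘ s).esymm (k + 1) = s.esymm (k + 1) + a * s.esymm k := by
  simp only [Multiset.esymm, Multiset.powersetCard_cons, Multiset.map_add, Multiset.sum_add,
    Multiset.map_map, Function.comp_apply, Multiset.prod_cons, Multiset.sum_map_mul_left]

theorem esymm_eq_zero_of_map_neg_eq {R : Type*} [CommRing R] [IsAddTorsionFree R]
    {s : Multiset R} (hs : s.map Neg.neg = s) {k : ℕ} (hk : Odd k) : s.esymm k = 0 := by
  have h : s.esymm k = -s.esymm k := by
    simpa only [hs, hk.neg_one_pow, neg_one_mul] using Multiset.esymm_neg s k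
  exact self_eq_neg.mp h

/-- The multiset of the signs `(-1)^i` for `1 ≤ i ≤ N`, whose elementary symmetric functions are
the numbers `hSgn N k`. -/
def alternatingSigns (N : ℕ) : Multiset ℤ :=
  (Icc 1 N).val.map fun i => (-1) ^ i

theorem alternatingSigns_succ (N : ℕ) :
    alternatingSigns (N + 1) = (-1) ^ (N + 1) ::ₘ alternatingSigns N := by
  have hmem : N + 1 ∉ Icc 1 N := by simp
  rw [alternatingSigns, ← insert_Icc_right_eq_Icc_add_one (Nat.le_add_left 1 N),
    insert_val_of_notMem hmem, Multiset.map_cons, alternatingSigns]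

theorem map_neg_alternatingSigns_two_mul (m : ℕ) :
    (alternatingSigns (2 * m)).map Neg.neg = alternatingSigns (2 * m) := by
  induction m with
  | zero => rfl
  | succ m ih =>
    have hpair : alternatingSigns (2 * (m + 1)) = 1 ::ₘ -1 ::ₘ alternatingSigns (2 * m) := by
      rw [Nat.mul_succ, alternatingSigns_succ, alternatingSigns_succ,
        (odd_two_mul_add_one m).neg_one_pow, (odd_two_mul_add_one m).add_one.neg_one_pow]
    rw [hpair, Multiset.map_cons, Multiset.map_cons, ih, neg_neg, Multiset.cons_swap]

theorem hSgn_eq_esymm (N k : ℕ) : hSgn N k = (alternatingSigns N).esymm k := by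
  rw [alternatingSigns, esymm_map_val, hSgn]
  exact sum_congr rfl fun s _ => (prod_pow_eq_pow_sum s (fun i => i) (-1)).symm

theorem hSgn_succ_succ (N k : ℕ) :
    hSgn (N + 1) (k + 1) = hSgn N (k + 1) + (-1) ^ (N + 1) * hSgn N k := by
  simp only [hSgn_eq_esymm, alternatingSigns_succ, esymm_cons_succ]

theorem hSgn_eq_zero_of_even_of_odd {N k : ℕ} (hN : Even N) (hk : Odd k) : hSgn N k = 0 := by
  obtain ⟨m, rfl⟩ := even_iff_exists_two_mul.mp hN
  rw [hSgn_eq_esymm]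
  exact esymm_eq_zero_of_map_neg_eq (map_neg_alternatingSigns_two_mul m) hk

/-- For every odd `N ≥ 3` and every `1 ≤ k ≤ N−1`:
`h_{N,k} = −h_{N−1,k−1}` if `k` is odd, and `h_{N,k} = h_{N−1,k}` if `k` is even. -/
theorem hSgn_odd_rec (N : ℕ) (hN : 3 ≤ N) (hNo : Odd N) (k : ℕ)
    (hk1 : 1 ≤ k) (hkN : k ≤ N - 1) :
    (Odd k → hSgn N k = -hSgn (N - 1) (k - 1)) ∧
      (Even k → hSgn N k = hSgn (N - 1) k) := by
  obtain ⟨n, rfl⟩ := Nat.exists_eq_add_of_le' hNo.pos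
  obtain ⟨j, rfl⟩ := Nat.exists_eq_add_of_le' hk1
  have hn : Even n := by simpa [Nat.even_add_one, ← Nat.not_even_iff_odd] using hNo
  have hrec : hSgn (n + 1) (j + 1) = hSgn n (j + 1) - hSgn n j := by
    rw [hSgn_succ_succ, hNo.neg_one_pow, neg_one_mul, sub_eq_add_neg]
  simp only [Nat.add_sub_cancel]
  constructor
  · intro hk
    rw [hrec, hSgn_eq_zero_of_even_of_odd hn hk, zero_sub]
  · intro hk
    have hj : Odd j := by simpa [Nat.even_add_one] using hk
    rw [hrec, hSgn_eq_zero_of_even_of_odd hn hj, sub_zero]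
end

section
/- Every complex eigenvalue of the N×N real matrix K_{N,c} (the transposed n-order even NP matrix) is real and lies in the interval [−1/2, 1/2]; in particular K_{N,c} has N real eigenvalues, counted with multiplicity, all contained in [−1/2, 1/2]. -/
open Finset Polynomial

/-- The transposed `n`-order even NP matrix `K_{N,c}`: with 1-based indices
`p = a+1`, `q = b+1`, the `(p,p)` entry is `(−1)^p (1/2) e^{−2nξ_p}`, the
`(p,q)` entry for `q > p` is `(−1)^p cosh(nξ_q) e^{−nξ_p}`, and for `q < p` it
is `(−1)^{p−1} sinh(nξ_p) e^{−nξ_q}`. -/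
noncomputable def Kc (n N : ℕ) (ξ : ℕ → ℝ) : Matrix (Fin N) (Fin N) ℝ :=
  fun a b =>
    if a = b then
      (-1 : ℝ) ^ ((a : ℕ) + 1) * (Real.exp (-(2 * n * ξ ((a : ℕ) + 1))) / 2)
    else if a < b then
      (-1 : ℝ) ^ ((a : ℕ) + 1) * (Real.cosh (n * ξ ((b : ℕ) + 1)) * Real.exp (-(n * ξ ((a : ℕ) + 1))))
    else
      (-1 : ℝ) ^ (a : ℕ) * (Real.sinh (n * ξ ((a : ℕ) + 1)) * Real.exp (-(n * ξ ((b : ℕ) + 1))))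

/-!
Write `x_k = n ξ_k` and let `u` be an eigenvector with eigenvalue `μ`. The potential
`φ(t) = ∑ u_j cosh(min(t, x_j)) e^{-max(t, x_j)}` solves `φ'' = φ` away from the nodes `x_k`, has
`φ'(0) = 0` and decays at infinity. At `x_k` its derivative below exceeds the one above by `u_k`,
while the `k`-th row of the matrix computes `±` the mean of the two one-sided derivatives, with a
sign alternating in `k`. Multiplying both by `conj (φ (x_k))` and summing over `k`, summation by
parts gives `∑ conj φ(x_k) u_k = ∑ E_i` and `∑ conj φ(x_k) (K u)_k = ∑ ± E_i / 2`, where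
`E_i = ∫ |φ'|² + |φ|²` is the energy of `φ` between consecutive nodes. So `μ` is the average of the
numbers `± 1 / 2` with respect to the nonnegative weights `E_i`, which do not all vanish.
-/

open scoped ComplexConjugate

section BoundaryForm

/-- The value of `conj φ * φ'` at `t`, for the solution `φ(t) = a e^t + b e^{-t}` of `φ'' = φ`. -/
noncomputable def boundaryForm (a b : ℂ) (t : ℝ) : ℂ :=
  conj (a * Real.exp t + b * Real.exp (-t)) * (a * Real.exp t - b * Real.exp (-t))

/-- The energy `∫ |φ'|² + |φ|²` over `[s, t]` of `φ = a e^t + b e^{-t}`, in closed form. -/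
noncomputable def intervalEnergy (a b : ℂ) (s t : ℝ) : ℝ :=
  ‖a‖ ^ 2 * (Real.exp t ^ 2 - Real.exp s ^ 2) + ‖b‖ ^ 2 * (Real.exp (-s) ^ 2 - Real.exp (-t) ^ 2)

lemma ofReal_exp_mul_exp_neg (t : ℝ) : (Real.exp t : ℂ) * Real.exp (-t) = 1 := by
  rw [← Complex.ofReal_mul, ← Real.exp_add, add_neg_cancel, Real.exp_zero, Complex.ofReal_one]

lemma boundaryForm_eq (a b : ℂ) (t : ℝ) :
    boundaryForm a b t =
      ‖a‖ ^ 2 * (Real.exp t : ℂ) ^ 2 - ‖b‖ ^ 2 * (Real.exp (-t) : ℂ) ^ 2 +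
        (conj b * a - conj a * b) := by
  simp only [boundaryForm, map_add, map_mul, Complex.conj_ofReal, ← Complex.conj_mul']
  linear_combination (conj b * a - conj a * b) * ofReal_exp_mul_exp_neg t

lemma boundaryForm_sub (a b : ℂ) (s t : ℝ) :
    boundaryForm a b t - boundaryForm a b s = intervalEnergy a b s t := by
  simp only [boundaryForm_eq, intervalEnergy]
  push_cast
  ring

lemma intervalEnergy_nonneg (a b : ℂ) {s t : ℝ} (hst : s ≤ t) : 0 ≤ intervalEnergy a b s t := by
  have h_exp : Real.exp s ^ 2 ≤ Real.exp t ^ 2 := by gcongr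
  have h_exp_neg : Real.exp (-t) ^ 2 ≤ Real.exp (-s) ^ 2 := by gcongr
  exact add_nonneg (mul_nonneg (sq_nonneg _) (sub_nonneg.2 h_exp))
    (mul_nonneg (sq_nonneg _) (sub_nonneg.2 h_exp_neg))

lemma intervalEnergy_pos {a : ℂ} (ha : a ≠ 0) (b : ℂ) {s t : ℝ} (hst : s < t) :
    0 < intervalEnergy a b s t := by
  have h_exp : Real.exp s ^ 2 < Real.exp t ^ 2 := by gcongr
  have h_exp_neg : Real.exp (-t) ^ 2 ≤ Real.exp (-s) ^ 2 := by gcongr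
  exact add_pos_of_pos_of_nonneg (mul_pos (by positivity) (sub_pos.2 h_exp))
    (mul_nonneg (sq_nonneg _) (sub_nonneg.2 h_exp_neg))

end BoundaryForm

section Layers

variable (N : ℕ) (x : ℕ → ℝ) (u : ℕ → ℂ)

/-- The coefficient of `e^t` in the potential on layer `i`. Layer `0` is `[x 0, ∞)` and layer
`i + 1` is `[x (i + 1), x i]`; the nodes decrease to `x N = 0`, which carries no source. -/
noncomputable def growthCoeff (i : ℕ) : ℂ :=
  (∑ j ∈ range i, u j * Real.exp (-x j)) / 2

/-- The coefficient of `e^{-t}` in the potential on layer `i`. -/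
noncomputable def decayCoeff (i : ℕ) : ℂ :=
  growthCoeff x u i + ∑ j ∈ Ico i N, u j * Real.cosh (x j)

/-- The potential `∑ u_j cosh(min(t, x_j)) e^{-max(t, x_j)}`, by its formula on layer `i`. -/
noncomputable def layerPotential (i : ℕ) (t : ℝ) : ℂ :=
  growthCoeff x u i * Real.exp t + decayCoeff N x u i * Real.exp (-t)

/-- The derivative of `layerPotential` in `t`. -/
noncomputable def layerFlux (i : ℕ) (t : ℝ) : ℂ :=
  growthCoeff x u i * Real.exp t - decayCoeff N x u i * Real.exp (-t)

/-- The energy `∫ |φ'|² + |φ|²` of the potential over layer `i`, in closed form. -/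
noncomputable def layerEnergy : ℕ → ℝ
  | 0 => ‖decayCoeff N x u 0‖ ^ 2 * Real.exp (-x 0) ^ 2
  | i + 1 => intervalEnergy (growthCoeff x u (i + 1)) (decayCoeff N x u (i + 1)) (x (i + 1)) (x i)

lemma growthCoeff_zero : growthCoeff x u 0 = 0 := by
  simp [growthCoeff]

lemma growthCoeff_succ (k : ℕ) :
    growthCoeff x u (k + 1) = growthCoeff x u k + u k * Real.exp (-x k) / 2 := by
  rw [growthCoeff, sum_range_succ, add_div, growthCoeff]

lemma decayCoeff_self : decayCoeff N x u N = growthCoeff x u N := by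
  simp [decayCoeff]

variable {N}

lemma decayCoeff_succ {k : ℕ} (hk : k < N) :
    decayCoeff N x u (k + 1) = decayCoeff N x u k - u k * Real.exp (x k) / 2 := by
  simp only [decayCoeff, growthCoeff_succ, sum_eq_sum_Ico_succ_bot hk, Real.cosh_eq]
  push_cast
  ring

lemma layerPotential_succ_node {k : ℕ} (hk : k < N) :
    layerPotential N x u (k + 1) (x k) = layerPotential N x u k (x k) := by
  simp only [layerPotential, growthCoeff_succ, decayCoeff_succ x u hk]
  ring

lemma layerFlux_succ_node {k : ℕ} (hk : k < N) :
    layerFlux N x u (k + 1) (x k) = layerFlux N x u k (x k) + u k := by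
  simp only [layerFlux, growthCoeff_succ, decayCoeff_succ x u hk]
  linear_combination u k * ofReal_exp_mul_exp_neg (x k)

variable {x}

lemma layerEnergy_nonneg (hx : StrictAntiOn x (Set.Iic N)) {i : ℕ} (hi : i ≤ N) :
    0 ≤ layerEnergy N x u i := by
  cases i with
  | zero => exact mul_nonneg (sq_nonneg _) (sq_nonneg _)
  | succ i => exact intervalEnergy_nonneg _ _ (hx (by grind) hi i.lt_succ_self).le

lemma layerEnergy_pos (hx : StrictAntiOn x (Set.Iic N)) {i : ℕ} (hi : i ≤ N)
    (ha : growthCoeff x u i ≠ 0) : 0 < layerEnergy N x u i := by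
  cases i with
  | zero => exact absurd (growthCoeff_zero x u) ha
  | succ i => exact intervalEnergy_pos ha _ (hx (by grind) hi i.lt_succ_self)

variable {u}

lemma exists_growthCoeff_ne_zero (hu : ∃ k < N, u k ≠ 0) : ∃ i ≤ N, growthCoeff x u i ≠ 0 := by
  by_contra! h
  obtain ⟨k, hk, huk⟩ := hu
  have h_jump := growthCoeff_succ x u k
  rw [h (k + 1) hk, h k hk.le, zero_add] at h_jump
  simpa [huk] using h_jump.symm

lemma sum_layerEnergy_pos (hx : StrictAntiOn x (Set.Iic N)) (hu : ∃ k < N, u k ≠ 0) :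
    0 < ∑ i ∈ range (N + 1), layerEnergy N x u i := by
  obtain ⟨i, hi, ha⟩ := exists_growthCoeff_ne_zero (x := x) hu
  exact sum_pos' (fun j hj => layerEnergy_nonneg u hx (mem_range_succ_iff.1 hj))
    ⟨i, mem_range_succ_iff.2 hi, layerEnergy_pos u hx hi ha⟩

variable (u)

lemma sum_mul_layerEnergy (hxN : x N = 0) (w : ℕ → ℂ) :
    ∑ i ∈ range (N + 1), w i * layerEnergy N x u i =
      ∑ k ∈ range N, conj (layerPotential N x u k (x k)) *
        (w (k + 1) * layerFlux N x u (k + 1) (x k) - w k * layerFlux N x u k (x k)) := by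
  let B (i k : ℕ) : ℂ := boundaryForm (growthCoeff x u i) (decayCoeff N x u i) (x k)
  have h_zero : (layerEnergy N x u 0 : ℂ) = -B 0 0 := by
    simp [layerEnergy, B, boundaryForm_eq, growthCoeff_zero]
  have h_succ (i : ℕ) : (layerEnergy N x u (i + 1) : ℂ) = B (i + 1) i - B (i + 1) (i + 1) :=
    (boundaryForm_sub ..).symm
  have h_last : B N N = 0 := by
    simp [B, boundaryForm, hxN, decayCoeff_self]
  calc ∑ i ∈ range (N + 1), w i * layerEnergy N x u i
      = ∑ k ∈ range N, w (k + 1) * B (k + 1) k -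
          (∑ k ∈ range N, w (k + 1) * B (k + 1) (k + 1) + w 0 * B 0 0) := by
        simp only [sum_range_succ', h_zero, h_succ, mul_sub, sum_sub_distrib]
        ring
    _ = ∑ k ∈ range N, (w (k + 1) * B (k + 1) k - w k * B k k) := by
        rw [← sum_range_succ' fun k => w k * B k k, sum_range_succ, h_last, sum_sub_distrib]
        ring
    _ = _ := by
        refine sum_congr rfl fun k hk => ?_
        have h_below : B (k + 1) k =
            conj (layerPotential N x u k (x k)) * layerFlux N x u (k + 1) (x k) := by
          rw [← layerPotential_succ_node x u (mem_range.1 hk)]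
          rfl
        have h_above : B k k = conj (layerPotential N x u k (x k)) * layerFlux N x u k (x k) := rfl
        rw [h_below, h_above]
        ring

lemma sum_layerEnergy (hxN : x N = 0) :
    ∑ i ∈ range (N + 1), (layerEnergy N x u i : ℂ) =
      ∑ k ∈ range N, conj (layerPotential N x u k (x k)) * u k := by
  have h := sum_mul_layerEnergy u hxN 1
  simp only [Pi.one_apply, one_mul] at h
  rw [h]
  refine sum_congr rfl fun k hk => ?_
  rw [layerFlux_succ_node x u (mem_range.1 hk), add_sub_cancel_left]

lemma sum_alternating_layerEnergy (hxN : x N = 0) :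
    ∑ i ∈ range (N + 1), (-1) ^ (i + 1) / 2 * (layerEnergy N x u i : ℂ) =
      ∑ k ∈ range N, conj (layerPotential N x u k (x k)) *
        ((-1) ^ k * ((layerFlux N x u (k + 1) (x k) + layerFlux N x u k (x k)) / 2)) := by
  rw [sum_mul_layerEnergy u hxN fun i => (-1) ^ (i + 1) / 2]
  refine sum_congr rfl fun k _ => ?_
  ring

variable {u}

theorem exists_mem_Icc_of_mean_layerFlux_eq (hx : StrictAntiOn x (Set.Iic N)) (hxN : x N = 0)
    (hu : ∃ k < N, u k ≠ 0) {μ : ℂ}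
    (h : ∀ k < N,
      (-1) ^ k * ((layerFlux N x u (k + 1) (x k) + layerFlux N x u k (x k)) / 2) = μ * u k) :
    ∃ r ∈ Set.Icc (-(1 / 2) : ℝ) (1 / 2), (r : ℂ) = μ := by
  have h_pos := sum_layerEnergy_pos hx hu
  have h_rayleigh : ∑ i ∈ range (N + 1), (-1) ^ (i + 1) / 2 * (layerEnergy N x u i : ℂ) =
      μ * ∑ i ∈ range (N + 1), (layerEnergy N x u i : ℂ) := by
    rw [sum_alternating_layerEnergy u hxN, sum_layerEnergy u hxN, mul_sum]
    refine sum_congr rfl fun k hk => ?_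
    rw [h k (mem_range.1 hk), mul_left_comm]
  refine ⟨(range (N + 1)).centerMass (layerEnergy N x u) fun i => (-1) ^ (i + 1) / 2,
    (convex_Icc _ _).centerMass_mem
      (fun i hi => layerEnergy_nonneg u hx (mem_range_succ_iff.1 hi)) h_pos fun i _ => ?_, ?_⟩
  · rcases neg_one_pow_eq_or ℝ (i + 1) with h_sign | h_sign <;> norm_num [h_sign]
  · have h_ne : ∑ i ∈ range (N + 1), (layerEnergy N x u i : ℂ) ≠ 0 := mod_cast h_pos.ne'
    simp only [centerMass, smul_eq_mul]
    push_cast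
    rw [inv_mul_eq_iff_eq_mul₀ h_ne, mul_comm _ μ, ← h_rayleigh]
    exact sum_congr rfl fun i _ => mul_comm _ _

end Layers

section KcMatrix

variable {n N : ℕ} {ξ : ℕ → ℝ}

/-- The nodes `n ξ_1 > ⋯ > n ξ_N > 0`, indexed from `0` and closed off by the value `0` at `N`. -/
noncomputable def scaledNode (n N : ℕ) (ξ : ℕ → ℝ) (k : ℕ) : ℝ :=
  if k < N then n * ξ (k + 1) else 0

lemma scaledNode_self : scaledNode n N ξ N = 0 :=
  if_neg (lt_irrefl N)

lemma strictAntiOn_scaledNode (hn : 0 < n) (hξ : ∀ i j, 1 ≤ i → i < j → j ≤ N → ξ j < ξ i)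
    (hpos : 0 < ξ N) : StrictAntiOn (scaledNode n N ξ) (Set.Iic N) := by
  intro i _ j (hj : j ≤ N) hij
  have hn' : (0 : ℝ) < n := Nat.cast_pos.2 hn
  have h_pos : 0 < ξ (i + 1) := by
    rcases (show i + 1 ≤ N by lia).eq_or_lt with h | h
    · rwa [h]
    · exact hpos.trans (hξ _ _ (by lia) h le_rfl)
  rw [scaledNode, scaledNode, if_pos (hij.trans_le hj)]
  split_ifs with h
  · exact mul_lt_mul_of_pos_left (hξ _ _ (by lia) (by lia) h) hn'
  · exact mul_pos hn' h_pos

/-- Since `e^{-2x} / 2 = cosh x e^{-x} - 1 / 2`, the diagonal merges with the upper triangle. -/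
lemma Kc_apply (a b : Fin N) :
    Kc n N ξ a b = (-1) ^ (a : ℕ) *
      ((if b < a then Real.sinh (scaledNode n N ξ a) * Real.exp (-scaledNode n N ξ b)
        else -(Real.cosh (scaledNode n N ξ b) * Real.exp (-scaledNode n N ξ a))) +
      if b = a then 1 / 2 else 0) := by
  rcases lt_trichotomy a b with h | rfl | h
  · simp [Kc, scaledNode, h, h.ne, h.ne', h.not_gt, pow_succ]
  · have h_exp : Real.exp (-(2 * n * ξ (a + 1))) = Real.exp (-(n * ξ (a + 1))) ^ 2 := by
      rw [← Real.exp_nat_mul]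
      push_cast
      ring_nf
    have h_inv : Real.exp (n * ξ (a + 1)) * Real.exp (-(n * ξ (a + 1))) = 1 :=
      mod_cast ofReal_exp_mul_exp_neg (n * ξ (a + 1))
    simp only [Kc, scaledNode, if_true, lt_irrefl, if_false, a.2, Real.cosh_eq, h_exp, pow_succ]
    linear_combination (-1) ^ (a : ℕ) / 2 * h_inv
  · simp [Kc, scaledNode, h, h.ne, h.ne', h.not_gt]

lemma Kc_mulVec_apply (u : ℕ → ℂ) (k : Fin N) :
    ((Kc n N ξ).map Complex.ofReal).mulVec (fun j => u j) k =
      (-1) ^ (k : ℕ) * ((layerFlux N (scaledNode n N ξ) u (k + 1) (scaledNode n N ξ k) +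
        layerFlux N (scaledNode n N ξ) u k (scaledNode n N ξ k)) / 2) := by
  set x := scaledNode n N ξ
  let f (j : ℕ) : ℂ :=
    if j < k then Real.sinh (x k) * Real.exp (-x j) else -(Real.cosh (x j) * Real.exp (-x k))
  have h_entry (j : Fin N) :
      (Kc n N ξ k j : ℂ) * u j = (-1) ^ (k : ℕ) * (f j * u j + if j = k then u j / 2 else 0) := by
    rw [Kc_apply]
    simp only [f, Fin.lt_def]
    split_ifs <;> push_cast <;> ring
  have h_inner : ∑ j ∈ range k, f j * u j = 2 * Real.sinh (x k) * growthCoeff x u k := by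
    rw [growthCoeff, mul_assoc, mul_left_comm, mul_div_cancel₀ _ two_ne_zero, mul_sum]
    refine sum_congr rfl fun j hj => ?_
    rw [show f j = _ from if_pos (mem_range.1 hj)]
    ring
  have h_outer : ∑ j ∈ Ico (k : ℕ) N, f j * u j =
      -(Real.exp (-x k) * (decayCoeff N x u k - growthCoeff x u k)) := by
    rw [decayCoeff, add_sub_cancel_left, mul_sum, ← sum_neg_distrib]
    refine sum_congr rfl fun j hj => ?_
    rw [show f j = _ from if_neg (mem_Ico.1 hj).1.not_gt]
    ring
  simp only [Matrix.mulVec, dotProduct, Matrix.map_apply, h_entry]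
  rw [← mul_sum, sum_add_distrib, Fin.sum_univ_eq_sum_range (fun j => f j * u j),
    ← sum_range_add_sum_Ico _ k.2.le, h_inner, h_outer, sum_ite_eq' univ k, if_pos (mem_univ k),
    layerFlux_succ_node x u k.2, layerFlux, Real.sinh_eq]
  push_cast
  ring

theorem exists_mem_Icc_of_hasEigenvalue_Kc (hn : 0 < n)
    (hξ : ∀ i j, 1 ≤ i → i < j → j ≤ N → ξ j < ξ i) (hpos : 0 < ξ N) {μ : ℂ}
    (hμ : Module.End.HasEigenvalue (Matrix.toLin' ((Kc n N ξ).map Complex.ofReal)) μ) :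
    ∃ r ∈ Set.Icc (-(1 / 2) : ℝ) (1 / 2), (r : ℂ) = μ := by
  obtain ⟨v, hv⟩ := hμ.exists_hasEigenvector
  obtain ⟨u, rfl⟩ := (Fin.val_injective (n := N)).surjective_comp_right v
  obtain ⟨k, hk⟩ := Function.ne_iff.1 hv.2
  refine exists_mem_Icc_of_mean_layerFlux_eq (strictAntiOn_scaledNode hn hξ hpos) scaledNode_self
    ⟨k, k.2, hk⟩ fun k hk => ?_
  exact (Kc_mulVec_apply u ⟨k, hk⟩).symm.trans (congrFun hv.apply_eq_smul ⟨k, hk⟩)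

end KcMatrix

/-- Every complex eigenvalue of `K_{N,c}` (i.e. every root of its
characteristic polynomial over `ℂ`) is real and lies in `[−1/2, 1/2]`;
in particular `K_{N,c}` has exactly `N` eigenvalues counted with multiplicity,
all real and contained in `[−1/2, 1/2]`. -/
theorem eigenvalues_Kc_real_mem_Icc (N n : ℕ) (hN : 0 < N) (hn : 0 < n) (ξ : ℕ → ℝ)
    (hξ : ∀ i j, 1 ≤ i → i < j → j ≤ N → ξ j < ξ i) (hpos : 0 < ξ N) :
    (∀ μ : ℂ, ((Kc n N ξ).map (Complex.ofReal)).charpoly.IsRoot μ →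
        μ.im = 0 ∧ -(1 / 2) ≤ μ.re ∧ μ.re ≤ 1 / 2) ∧
      Multiset.card ((Kc n N ξ).map (Complex.ofReal)).charpoly.roots = N := by
  refine ⟨fun μ hμ => ?_, ?_⟩
  · rw [← Matrix.charpoly_toLin', ← Module.End.hasEigenvalue_iff_isRoot_charpoly] at hμ
    obtain ⟨r, ⟨h_lower, h_upper⟩, rfl⟩ := exists_mem_Icc_of_hasEigenvalue_Kc hn hξ hpos hμ
    exact ⟨Complex.ofReal_im r, h_lower, h_upper⟩
  · rw [IsAlgClosed.card_roots_eq_natDegree, Matrix.charpoly_natDegree_eq_dim, Fintype.card_fin]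
end

section
/- For every λ ∈ ℂ one has det(−λ I_N − K_{N,c}) = (−1)^{N(N+1)/2} · det M_{N,c}^{(n)}(λ) and det(−λ I_N − K_{N,s}) = (−1)^{N(N+1)/2} · det M_{N,s}^{(n)}(λ), where the real matrices K_{N,c} and K_{N,s} are viewed as complex matrices and I_N is the N×N identity matrix. -/
/-!
With `J = diag(1, -1, 1, …)` and `P = M(0)` one has `M(λ) = λ J + P` and `K = J P`, in the even and
in the odd case alike. Since `J² = 1`, it follows that `-λ I - K = -J M(λ)`, and
`det (-J) = (-1) ^ (N (N + 1) / 2)`.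
-/

open Finset

/-- The transposed `n`-order odd NP matrix `K_{N,s}`. -/
noncomputable def Ks (n N : ℕ) (ξ : ℕ → ℝ) : Matrix (Fin N) (Fin N) ℝ :=
  fun a b =>
    if a = b then
      (-1 : ℝ) ^ (a : ℕ) * (Real.exp (-(2 * n * ξ ((a : ℕ) + 1))) / 2)
    else if a < b then
      (-1 : ℝ) ^ ((a : ℕ) + 1) * (Real.sinh (n * ξ ((b : ℕ) + 1)) * Real.exp (-(n * ξ ((a : ℕ) + 1))))
    else
      (-1 : ℝ) ^ (a : ℕ) * (Real.cosh (n * ξ ((a : ℕ) + 1)) * Real.exp (-(n * ξ ((b : ℕ) + 1))))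

section AlternatingSign

variable {R : Type*} [CommRing R] {N : ℕ}

/-- The `N × N` diagonal matrix `diag(1, -1, 1, …)` of alternating signs, which carries
the sign pattern of the NP matrices. Rows are indexed from `0`, so its `i`-th sign is `(-1) ^ i`
where the paper has `(-1) ^ (i - 1)`. -/
def altSign (R : Type*) [CommRing R] (N : ℕ) : Matrix (Fin N) (Fin N) R :=
  Matrix.diagonal fun i => (-1) ^ (i : ℕ)

theorem altSign_mul_self : altSign R N * altSign R N = 1 := by
  simp only [altSign, Matrix.diagonal_mul_diagonal, ← mul_pow, neg_mul_neg, one_mul, one_pow,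
    Matrix.diagonal_one]

theorem det_altSign : (altSign R N).det = (-1) ^ (N * (N - 1) / 2) := by
  rw [altSign, Matrix.det_diagonal, Fin.prod_univ_eq_prod_range (fun i => (-1 : R) ^ i) N,
    prod_pow_eq_pow_sum, sum_range_id]

theorem det_neg_altSign : (-altSign R N).det = (-1) ^ (N * (N + 1) / 2) := by
  rw [Matrix.det_neg, Fintype.card_fin, det_altSign, ← pow_add, add_comm, ← Nat.triangle_succ,
    Nat.add_sub_cancel, mul_comm]

theorem det_neg_smul_one_sub_altSign_mul (l : R) (P : Matrix (Fin N) (Fin N) R) :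
    ((-l) • (1 : Matrix (Fin N) (Fin N) R) - altSign R N * P).det =
      (-1) ^ (N * (N + 1) / 2) * (l • altSign R N + P).det := by
  have factor : (-l) • (1 : Matrix (Fin N) (Fin N) R) - altSign R N * P =
      -altSign R N * (l • altSign R N + P) := by
    rw [neg_mul, mul_add, mul_smul_comm, altSign_mul_self, neg_smul, neg_add, sub_eq_add_neg]
  rw [factor, Matrix.det_mul, det_neg_altSign]

end AlternatingSign

section PolarizationMatrices

variable (n N : ℕ) (ξ : ℕ → ℝ)

theorem Mc_eq_smul_altSign_add (l : ℂ) : Mc n N ξ l = l • altSign ℂ N + Mc n N ξ 0 := by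
  ext i j
  simp only [Matrix.add_apply, Matrix.smul_apply, altSign, Matrix.diagonal_apply, Mc, smul_eq_mul]
  split_ifs <;> ring

theorem Ms_eq_smul_altSign_add (l : ℂ) : Ms n N ξ l = l • altSign ℂ N + Ms n N ξ 0 := by
  ext i j
  simp only [Matrix.add_apply, Matrix.smul_apply, altSign, Matrix.diagonal_apply, Ms, smul_eq_mul]
  split_ifs <;> ring

theorem Kc_map_ofReal : (Kc n N ξ).map Complex.ofReal = altSign ℂ N * Mc n N ξ 0 := by
  ext i j
  simp only [Matrix.map_apply, altSign, Matrix.diagonal_mul, Kc, Mc]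
  split_ifs <;> push_cast <;> ring

theorem Ks_map_ofReal : (Ks n N ξ).map Complex.ofReal = altSign ℂ N * Ms n N ξ 0 := by
  ext i j
  simp only [Matrix.map_apply, altSign, Matrix.diagonal_mul, Ks, Ms]
  split_ifs <;> push_cast <;> ring

end PolarizationMatrices

theorem det_neg_smul_sub_K_general (N n : ℕ) (ξ : ℕ → ℝ) (l : ℂ) :
    ((-l) • (1 : Matrix (Fin N) (Fin N) ℂ) - (Kc n N ξ).map Complex.ofReal).det =
        (-1 : ℂ) ^ (N * (N + 1) / 2) * (Mc n N ξ l).det ∧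
      ((-l) • (1 : Matrix (Fin N) (Fin N) ℂ) - (Ks n N ξ).map Complex.ofReal).det =
        (-1 : ℂ) ^ (N * (N + 1) / 2) * (Ms n N ξ l).det := by
  rw [Kc_map_ofReal, Ks_map_ofReal, Mc_eq_smul_altSign_add n N ξ l, Ms_eq_smul_altSign_add n N ξ l]
  exact ⟨det_neg_smul_one_sub_altSign_mul l _, det_neg_smul_one_sub_altSign_mul l _⟩

/-- `det(−λ I − K_{N,c}) = (−1)^{N(N+1)/2} det M_{N,c}^{(n)}(λ)` and
`det(−λ I − K_{N,s}) = (−1)^{N(N+1)/2} det M_{N,s}^{(n)}(λ)`. -/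
theorem det_neg_smul_sub_K (N n : ℕ) (hN : 0 < N) (hn : 0 < n) (ξ : ℕ → ℝ)
    (hξ : ∀ i j, 1 ≤ i → i < j → j ≤ N → ξ j < ξ i) (hpos : 0 < ξ N) (l : ℂ) :
    ((-l) • (1 : Matrix (Fin N) (Fin N) ℂ) - (Kc n N ξ).map Complex.ofReal).det =
        (-1 : ℂ) ^ (N * (N + 1) / 2) * (Mc n N ξ l).det ∧
      ((-l) • (1 : Matrix (Fin N) (Fin N) ℂ) - (Ks n N ξ).map Complex.ofReal).det =
        (-1 : ℂ) ^ (N * (N + 1) / 2) * (Ms n N ξ l).det :=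
  det_neg_smul_sub_K_general N n ξ l
end

section
/- For every μ ∈ ℂ, the characteristic polynomials of the NP matrices are given explicitly by det(μ I_N − K_{N,c}) = f_N^−(μ) and det(μ I_N − K_{N,s}) = f_N^+(μ), where the real matrices K_{N,c} and K_{N,s} are viewed as complex matrices and I_N is the N×N identity matrix. -/
/-!
The matrices `K_{N,c}` and `K_{N,s}` differ by a matrix of rank one, because `cosh - sinh` is a
single exponential, and in each of them the last column above the corner and the last row left of
it are multiples of the two vectors of that difference. A determinant bordered in this way is a
combination of the determinants of the leading block and of its rank-one perturbation, so in passing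
from `N` to `N + 1` either characteristic polynomial is expressed through both of the previous ones.

On the other side, replacing `e` by `-e` multiplies the contribution of an index set `s` to `fFun`
by `(-1) ^ #s`, and the new largest index of `insert (N + 1) s` carries the sign `(-1) ^ (#s + 1)`
in the exponent. As `exp (-(-1) ^ k * x) = cosh x - (-1) ^ k * sinh x`, the pair `f_N^±` obeys the
same recursion.
-/

open Finset

/-- The function `f_N^±(λ) = Σ_{k=0}^{N} (λ^{N−k} / e^k) · sgnExpSum k`,
where `e = 2` gives `f_N^+` and `e = −2` gives `f_N^−`. -/
noncomputable def fFun (n N : ℕ) (ξ : ℕ → ℝ) (e : ℝ) (l : ℂ) : ℂ :=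
  ∑ k ∈ Finset.range (N + 1),
    l ^ (N - k) / (e : ℂ) ^ k * ((sgnExpSum n ξ 1 N k : ℝ) : ℂ)

open Matrix Polynomial

section BorderedDeterminant

variable {R : Type*} [CommRing R]

lemma det_fromBlocks_add_corner {m ι : Type*} [Fintype m] [DecidableEq m]
    [Unique ι] [Fintype ι] [DecidableEq ι] (A : Matrix m m R) (B : Matrix m ι R)
    (C : Matrix ι m R) (D E : Matrix ι ι R) :
    (fromBlocks A B C (D + E)).det = (fromBlocks A B C D).det + A.det * E.det := by
  have updateRow_corner (C' : Matrix ι m R) (D' : Matrix ι ι R) :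
      (fromBlocks A B C D).updateRow (.inr default) (Sum.elim (C' default) (D' default)) =
        fromBlocks A B C' D' := by
    ext (i | i) j
    · cases j <;> simp [Matrix.updateRow_apply]
    · obtain rfl := Unique.eq_default i
      cases j <;> simp
  have row_add : Sum.elim (C default) ((D + E) default) =
      Sum.elim (C default) (D default) + Sum.elim ((0 : Matrix ι m R) default) (E default) := by
    ext (j | j) <;> simp
  rw [← updateRow_corner C (D + E), row_add, det_updateRow_add, updateRow_corner, updateRow_corner,
    det_fromBlocks_zero₂₁]

lemma det_fromBlocks_smul_replicateCol_smul_replicateRow {m ι : Type*} [Fintype m] [DecidableEq m]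
    [Unique ι] [Fintype ι] [DecidableEq ι] (A : Matrix m m R) (b c : m → R) (x y d : R) :
    (fromBlocks A (y • replicateCol ι b) (x • replicateRow ι c) (d • 1)).det =
      (d + x * y) * A.det - x * y * (A + vecMulVec b c).det := by
  -- The Schur complement of the corner `-1` in the border of `A` by `b` and `c` is
  -- `A + vecMulVec b c`, which singles out the corner `-(x * y)` for the rescaled border.
  have vecMulVec_eq_mul : vecMulVec b c = replicateCol ι b * replicateRow ι c := by
    ext
    simp [mul_apply, vecMulVec_apply]
  have factorization :
      fromBlocks A (y • replicateCol ι b) (x • replicateRow ι c) (-(x * y) • 1) =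
        fromBlocks 1 0 0 (x • 1) * fromBlocks (A + vecMulVec b c) (replicateCol ι b) 0 (-1) *
          fromBlocks 1 0 (-replicateRow ι c) (y • 1) := by
    simp [fromBlocks_multiply, vecMulVec_eq_mul, smul_smul, mul_comm]
  have corner : (d • 1 : Matrix ι ι R) = -(x * y) • 1 + (d + x * y) • 1 := by
    rw [← add_smul, neg_add_cancel_comm_assoc]
  rw [corner, det_fromBlocks_add_corner, factorization, det_mul, det_mul, det_fromBlocks_zero₁₂,
    det_fromBlocks_zero₂₁, det_fromBlocks_zero₁₂]
  simp only [det_unique, Matrix.smul_apply, Matrix.neg_apply, one_apply_eq, det_one, smul_eq_mul]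
  ring

lemma det_of_last_col_of_last_row {m : ℕ} (M : Matrix (Fin (m + 1)) (Fin (m + 1)) R)
    {b c : Fin m → R} {x y : R} (hcol : ∀ i : Fin m, M i.castSucc (Fin.last m) = y * b i)
    (hrow : ∀ j : Fin m, M (Fin.last m) j.castSucc = x * c j) :
    M.det = (M (Fin.last m) (Fin.last m) + x * y) * (M.submatrix Fin.castSucc Fin.castSucc).det -
      x * y * (M.submatrix Fin.castSucc Fin.castSucc + vecMulVec b c).det := by
  have blocks : M.submatrix finSumFinEquiv finSumFinEquiv =
      fromBlocks (M.submatrix Fin.castSucc Fin.castSucc) (y • replicateCol (Fin 1) b)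
        (x • replicateRow (Fin 1) c) (M (Fin.last m) (Fin.last m) • 1) := by
    have natAdd_eq_last (i : Fin 1) : Fin.natAdd m i = Fin.last m := by
      obtain rfl := Subsingleton.elim i (Fin.last 0)
      exact Fin.natAdd_last
    ext (i | i) (j | j)
    · rfl
    · simpa [natAdd_eq_last, Fin.castSucc] using hcol i
    · simpa [natAdd_eq_last, Fin.castSucc] using hrow j
    · simp [natAdd_eq_last, Subsingleton.elim i j]
  rw [← det_submatrix_equiv_self finSumFinEquiv, blocks,
    det_fromBlocks_smul_replicateCol_smul_replicateRow]

lemma charpoly_of_last_col_of_last_row {m : ℕ} (K : Matrix (Fin (m + 1)) (Fin (m + 1)) R)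
    {b c : Fin m → R} {x y : R} (hcol : ∀ i : Fin m, K i.castSucc (Fin.last m) = y * b i)
    (hrow : ∀ j : Fin m, K (Fin.last m) j.castSucc = x * c j) :
    K.charpoly =
      (X - C (K (Fin.last m) (Fin.last m) - x * y)) *
          (K.submatrix Fin.castSucc Fin.castSucc).charpoly -
        C (x * y) * (K.submatrix Fin.castSucc Fin.castSucc - vecMulVec b c).charpoly := by
  have submatrix_charmatrix : K.charmatrix.submatrix Fin.castSucc Fin.castSucc =
      (K.submatrix Fin.castSucc Fin.castSucc).charmatrix := by
    ext1 i j
    simp [charmatrix_apply, diagonal_apply]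
  have charmatrix_add_vecMulVec (L : Matrix (Fin m) (Fin m) R) :
      L.charmatrix + vecMulVec (C ∘ b) (C ∘ c) = (L - vecMulVec b c).charmatrix := by
    ext1 i j
    simp only [Matrix.add_apply, Matrix.sub_apply, charmatrix_apply, vecMulVec_apply,
      Function.comp_apply, C_sub, C_mul]
    ring
  have charmatrix_last_col (i : Fin m) :
      K.charmatrix i.castSucc (Fin.last m) = C (-y) * (C ∘ b) i := by
    simp [hcol]
  have charmatrix_last_row (j : Fin m) :
      K.charmatrix (Fin.last m) j.castSucc = C (-x) * (C ∘ c) j := by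
    simp [charmatrix_apply_ne _ _ _ (Fin.castSucc_lt_last j).ne', hrow]
  rw [charpoly, det_of_last_col_of_last_row _ charmatrix_last_col charmatrix_last_row,
    submatrix_charmatrix, charmatrix_add_vecMulVec, charmatrix_apply_eq, charpoly, charpoly]
  simp only [C_neg, C_sub, C_mul]
  ring

lemma det_smul_one_sub_map_algebraMap {m S : Type*} [Fintype m] [DecidableEq m] [CommRing S]
    [Algebra R S] (K : Matrix m m R) (μ : S) :
    (μ • (1 : Matrix m m S) - K.map (algebraMap R S)).det = aeval μ K.charpoly := by
  rw [aeval_def, ← eval_map, ← charpoly_map, eval_charpoly, scalar_apply, smul_one_eq_diagonal]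

end BorderedDeterminant

section NPMatrix

variable (n N : ℕ) (ξ : ℕ → ℝ)

/-- The vector `(e^{-nξ_k})_k`, the row factor of the rank-one matrix `K_{N,c} - K_{N,s}`. -/
noncomputable def expVec (k : Fin N) : ℝ :=
  Real.exp (-(n * ξ (k + 1)))

/-- The vector `((-1)^k e^{-nξ_k})_k`, the column factor of the rank-one matrix
`K_{N,c} - K_{N,s}`; the index `k` of the paper starts at `1`, hence the exponent `k + 1`. -/
noncomputable def signedExpVec (k : Fin N) : ℝ :=
  (-1) ^ (k + 1 : ℕ) * expVec n N ξ k

lemma Kc_sub_Ks : Kc n N ξ - Ks n N ξ = vecMulVec (signedExpVec n N ξ) (expVec n N ξ) := by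
  ext i j
  simp only [Matrix.sub_apply, vecMulVec_apply, signedExpVec, expVec, Kc, Ks]
  split_ifs with hij
  · subst hij
    have exp_sq : Real.exp (-(2 * n * ξ (i + 1))) = Real.exp (-(n * ξ (i + 1))) ^ 2 := by
      rw [← Real.exp_nat_mul]
      push_cast
      ring_nf
    rw [exp_sq]
    ring
  · rw [← Real.cosh_sub_sinh (n * ξ (j + 1))]
    ring
  · rw [← Real.cosh_sub_sinh (n * ξ (i + 1))]
    ring

lemma Kc_submatrix_castSucc :
    (Kc n (N + 1) ξ).submatrix Fin.castSucc Fin.castSucc = Kc n N ξ := by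
  ext i j
  simp [Kc]

lemma Ks_submatrix_castSucc :
    (Ks n (N + 1) ξ).submatrix Fin.castSucc Fin.castSucc = Ks n N ξ := by
  ext i j
  simp [Ks]

lemma Kc_castSucc_last (i : Fin N) :
    Kc n (N + 1) ξ i.castSucc (Fin.last N) =
      Real.cosh (n * ξ (N + 1)) * signedExpVec n N ξ i := by
  simp only [Kc, (Fin.castSucc_lt_last i).ne, Fin.castSucc_lt_last, if_false, if_true,
    Fin.val_castSucc, Fin.val_last, signedExpVec, expVec]
  ring

lemma Ks_castSucc_last (i : Fin N) :
    Ks n (N + 1) ξ i.castSucc (Fin.last N) =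
      Real.sinh (n * ξ (N + 1)) * signedExpVec n N ξ i := by
  simp only [Ks, (Fin.castSucc_lt_last i).ne, Fin.castSucc_lt_last, if_false, if_true,
    Fin.val_castSucc, Fin.val_last, signedExpVec, expVec]
  ring

lemma Kc_last_castSucc (j : Fin N) :
    Kc n (N + 1) ξ (Fin.last N) j.castSucc =
      (-1) ^ N * Real.sinh (n * ξ (N + 1)) * expVec n N ξ j := by
  simp only [Kc, (Fin.castSucc_lt_last j).ne', (Fin.castSucc_lt_last j).not_gt, if_false,
    Fin.val_castSucc, Fin.val_last, expVec]
  ring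

lemma Ks_last_castSucc (j : Fin N) :
    Ks n (N + 1) ξ (Fin.last N) j.castSucc =
      (-1) ^ N * Real.cosh (n * ξ (N + 1)) * expVec n N ξ j := by
  simp only [Ks, (Fin.castSucc_lt_last j).ne', (Fin.castSucc_lt_last j).not_gt, if_false,
    Fin.val_castSucc, Fin.val_last, expVec]
  ring

lemma Kc_last_last :
    Kc n (N + 1) ξ (Fin.last N) (Fin.last N) =
      (-1) ^ (N + 1) * (Real.exp (-(2 * n * ξ (N + 1))) / 2) := by
  simp [Kc]

lemma Ks_last_last :
    Ks n (N + 1) ξ (Fin.last N) (Fin.last N) =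
      (-1) ^ N * (Real.exp (-(2 * n * ξ (N + 1))) / 2) := by
  simp [Ks]

lemma charpoly_Kc_succ :
    (Kc n (N + 1) ξ).charpoly = X * (Kc n N ξ).charpoly - C ((-1) ^ (N + 1) / 2) *
      (C (Real.cosh (2 * n * ξ (N + 1))) * (Kc n N ξ).charpoly -
        C (Real.sinh (2 * n * ξ (N + 1))) * (Ks n N ξ).charpoly) := by
  rw [charpoly_of_last_col_of_last_row _ (Kc_castSucc_last n N ξ) (Kc_last_castSucc n N ξ),
    Kc_submatrix_castSucc, ← Kc_sub_Ks, sub_sub_cancel, Kc_last_last, ← Real.cosh_sub_sinh,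
    mul_assoc 2, Real.sinh_two_mul]
  have corner (c s h : ℝ) : (-1) ^ (N + 1) * ((h - 2 * s * c) / 2) - (-1) ^ N * s * c =
      (-1) ^ (N + 1) / 2 * h := by ring
  have off_corner (c s : ℝ) : (-1) ^ N * s * c = -((-1) ^ (N + 1) / 2 * (2 * s * c)) := by ring
  rw [corner, off_corner]
  simp only [C_mul, C_neg]
  ring

lemma charpoly_Ks_succ :
    (Ks n (N + 1) ξ).charpoly = X * (Ks n N ξ).charpoly + C ((-1) ^ (N + 1) / 2) *
      (C (Real.cosh (2 * n * ξ (N + 1))) * (Ks n N ξ).charpoly -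
        C (Real.sinh (2 * n * ξ (N + 1))) * (Kc n N ξ).charpoly) := by
  have last_col (i : Fin N) : Ks n (N + 1) ξ i.castSucc (Fin.last N) =
      -Real.sinh (n * ξ (N + 1)) * (-signedExpVec n N ξ) i := by
    rw [Ks_castSucc_last, Pi.neg_apply, neg_mul_neg]
  have sub_neg_vecMulVec :
      Ks n N ξ - vecMulVec (-signedExpVec n N ξ) (expVec n N ξ) = Kc n N ξ := by
    rw [neg_vecMulVec, ← Kc_sub_Ks, sub_neg_eq_add, add_sub_cancel]
  rw [charpoly_of_last_col_of_last_row _ last_col (Ks_last_castSucc n N ξ),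
    Ks_submatrix_castSucc, sub_neg_vecMulVec, Ks_last_last, ← Real.cosh_sub_sinh,
    mul_assoc 2, Real.sinh_two_mul]
  have corner (c s h : ℝ) : (-1) ^ N * ((h - 2 * s * c) / 2) - (-1) ^ N * c * -s =
      -((-1) ^ (N + 1) / 2 * h) := by ring
  have off_corner (c s : ℝ) : (-1) ^ N * c * -s = (-1) ^ (N + 1) / 2 * (2 * s * c) := by ring
  rw [corner, off_corner]
  simp only [C_mul, C_neg]
  ring

end NPMatrix

section AlternatingSum

/-- The sum `∑_l (-1)^l f (i_l)` over a finite set `s = {i_1 < i_2 < ⋯}`, in which the position `l`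
of `i ∈ s` is the number of elements of `s` that are at most `i`. -/
def alternatingSum {ι R : Type*} [LinearOrder ι] [Ring R] (f : ι → R) (s : Finset ι) : R :=
  ∑ i ∈ s, (-1) ^ #{j ∈ s | j ≤ i} * f i

lemma alternatingSum_insert {ι R : Type*} [LinearOrder ι] [Ring R] (f : ι → R) {s : Finset ι}
    {a : ι} (ha : ∀ i ∈ s, i < a) :
    alternatingSum f (insert a s) = (-1) ^ (#s + 1) * f a + alternatingSum f s := by
  have notMem : a ∉ s := fun h => lt_irrefl a (ha a h)
  have filter_le_max : {j ∈ insert a s | j ≤ a} = insert a s :=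
    filter_true_of_mem fun j hj => (mem_insert.mp hj).elim le_of_eq fun h => (ha j h).le
  have filter_le_of_mem : ∀ i ∈ s, {j ∈ insert a s | j ≤ i} = {j ∈ s | j ≤ i} := fun i hi => by
    rw [filter_insert, if_neg (ha i hi).not_ge]
  rw [alternatingSum, sum_insert notMem, filter_le_max, card_insert_of_notMem notMem,
    alternatingSum]
  congr 1
  exact sum_congr rfl fun i hi => by rw [filter_le_of_mem i hi]

end AlternatingSum

section SubsetSum

lemma exp_neg_one_pow_mul (k : ℕ) (x : ℝ) :
    Real.exp ((-1) ^ k * x) = Real.cosh x + (-1) ^ k * Real.sinh x := by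
  rcases neg_one_pow_eq_or ℝ k with h | h <;> simp [h, ← Real.cosh_sub_sinh, sub_eq_add_neg]

variable (n : ℕ) (ξ : ℕ → ℝ)

/-- The summand `(-1)^{i_1 + ⋯ + i_k} exp(2 n ∑_l (-1)^l ξ_{i_l})` of `sgnExpSum` that belongs to
the index set `s = {i_1 < ⋯ < i_k}`. -/
noncomputable def sgnExp (s : Finset ℕ) : ℝ :=
  (-1) ^ (∑ i ∈ s, i) * Real.exp (2 * n * alternatingSum ξ s)

lemma sgnExp_insert {s : Finset ℕ} {a : ℕ} (ha : ∀ i ∈ s, i < a) :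
    sgnExp n ξ (insert a s) = (-1) ^ a *
      (Real.cosh (2 * n * ξ a) - (-1) ^ #s * Real.sinh (2 * n * ξ a)) * sgnExp n ξ s := by
  have notMem : a ∉ s := fun h => lt_irrefl a (ha a h)
  rw [sgnExp, alternatingSum_insert ξ ha, sum_insert notMem, mul_add, Real.exp_add,
    mul_left_comm (2 * n : ℝ), exp_neg_one_pow_mul, sgnExp]
  ring

lemma fFun_eq_sum_powerset (N : ℕ) (e : ℝ) (μ : ℂ) :
    fFun n N ξ e μ =
      ∑ s ∈ (Icc 1 N).powerset, μ ^ (N - #s) / (e : ℂ) ^ #s * (sgnExp n ξ s : ℂ) := by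
  rw [sum_powerset, Nat.card_Icc, Nat.add_sub_cancel, fFun]
  refine sum_congr rfl fun k _ => ?_
  rw [sgnExpSum, Complex.ofReal_sum, mul_sum]
  refine sum_congr rfl fun s hs => ?_
  rw [(mem_powersetCard.mp hs).2]
  rfl

lemma fFun_succ (N : ℕ) (e : ℝ) (μ : ℂ) :
    fFun n (N + 1) ξ e μ = μ * fFun n N ξ e μ + (-1) ^ (N + 1) / (e : ℂ) *
      ((Real.cosh (2 * n * ξ (N + 1)) : ℂ) * fFun n N ξ e μ -
        (Real.sinh (2 * n * ξ (N + 1)) : ℂ) * fFun n N ξ (-e) μ) := by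
  have notMem : N + 1 ∉ Icc 1 N := by simp
  simp only [fFun_eq_sum_powerset]
  rw [← insert_Icc_right_eq_Icc_add_one (by lia), sum_powerset_insert notMem]
  simp only [mul_sum, ← sum_sub_distrib]
  congr 1 <;> refine sum_congr rfl fun s hs => ?_ <;> rw [mem_powerset] at hs
  · have card_le : #s ≤ N := by simpa using card_le_card hs
    rw [Nat.sub_add_comm card_le, pow_succ]
    ring
  · rw [card_insert_of_notMem fun h => notMem (hs h), Nat.add_sub_add_right,
      sgnExp_insert n ξ fun i hi => Nat.lt_add_one_of_le (mem_Icc.mp (hs hi)).2]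
    have neg_one_pow_inv : ((-1 : ℂ) ^ #s)⁻¹ = (-1) ^ #s := by rw [← inv_pow, inv_neg_one]
    push_cast
    rw [neg_pow (e : ℂ), div_mul_eq_div_div_swap, div_eq_mul_inv _ ((-1 : ℂ) ^ #s), neg_one_pow_inv]
    ring

end SubsetSum

theorem charpoly_K_eq_fFun_general (N n : ℕ) (ξ : ℕ → ℝ) (μ : ℂ) :
    (μ • (1 : Matrix (Fin N) (Fin N) ℂ) - (Kc n N ξ).map Complex.ofReal).det =
        fFun n N ξ (-2) μ ∧
      (μ • (1 : Matrix (Fin N) (Fin N) ℂ) - (Ks n N ξ).map Complex.ofReal).det =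
        fFun n N ξ 2 μ := by
  suffices h : aeval μ (Kc n N ξ).charpoly = fFun n N ξ (-2) μ ∧
      aeval μ (Ks n N ξ).charpoly = fFun n N ξ 2 μ by
    simpa only [← det_smul_one_sub_map_algebraMap, Complex.coe_algebraMap] using h
  induction N with
  | zero => simp [charpoly_isEmpty, fFun_eq_sum_powerset, sgnExp, alternatingSum]
  | succ N ih =>
    obtain ⟨hc, hs⟩ := ih
    constructor
    · simp only [charpoly_Kc_succ, fFun_succ, map_sub, map_mul, aeval_X, aeval_C, hc, hs, neg_neg,
        Complex.coe_algebraMap]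
      push_cast
      ring
    · simp only [charpoly_Ks_succ, fFun_succ, map_sub, map_add, map_mul, aeval_X, aeval_C, hc, hs,
        Complex.coe_algebraMap]
      push_cast
      ring

/-- The characteristic polynomials of the NP matrices:
`det(μ I − K_{N,c}) = f_N^−(μ)` and `det(μ I − K_{N,s}) = f_N^+(μ)`. -/
theorem charpoly_K_eq_fFun (N n : ℕ) (hN : 0 < N) (hn : 0 < n) (ξ : ℕ → ℝ)
    (hξ : ∀ i j, 1 ≤ i → i < j → j ≤ N → ξ j < ξ i) (hpos : 0 < ξ N) (μ : ℂ) :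
    (μ • (1 : Matrix (Fin N) (Fin N) ℂ) - (Kc n N ξ).map Complex.ofReal).det =
        fFun n N ξ (-2) μ ∧
      (μ • (1 : Matrix (Fin N) (Fin N) ℂ) - (Ks n N ξ).map Complex.ofReal).det =
        fFun n N ξ 2 μ :=
  charpoly_K_eq_fFun_general N n ξ μ
end
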